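/- Let Λ be a basic finite-dimensional algebra over an algebraically closed field and C an irreducible component of Rep_d(Λ). Then there exist a decomposition d = Σ_{r=1}^s d^{(r)} and indecomposable irreducible components C_r of Rep_{d^{(r)}}(Λ) for 1 ≤ r ≤ s such that C is the Zariski closure of the direct sum C_1 ⊕ ⋯ ⊕ C_s. Moreover, the dimension vectors d^{(r)} and the components C_r with these properties are unique up to reordering. -/

import Mathlib

open Finset

/-! # Varieties of representations of a quiver with relations: basic setup -/

/-- The Zariski topology on the affine space `ι → K`: it is generated by the basic open
sets `D(p) = {x | p(x) ≠ 0}`, where `p` ranges over multivariate polynomials. -/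
def zariskiTopology (ι K : Type) [CommSemiring K] : TopologicalSpace (ι → K) :=
  TopologicalSpace.generateFrom
    {U | ∃ p : MvPolynomial ι K, U = {x | MvPolynomial.eval x p ≠ 0}}

/-- A finite quiver `Q`: vertices `Fin n`, arrows `Fin numArrows` with source and
target maps. -/
structure QuiverData where
  n : ℕ
  numArrows : ℕ
  src : Fin numArrows → Fin n
  tgt : Fin numArrows → Fin n

namespace QuiverData

variable (Q : QuiverData) (d : Fin Q.n → ℕ) (K : Type) [Field K]

/-- Index of the coordinates of the affine space of `d`-dimensional representations:
for each arrow `a` a matrix entry index in `Fin (d (tgt a)) × Fin (d (src a))`. -/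
abbrev Coords := Σ a : Fin Q.numArrows, Fin (d (Q.tgt a)) × Fin (d (Q.src a))

/-- The affine space of `d`-dimensional representations of `Q`:
a point `x` assigns to each arrow `a` a `d (tgt a) × d (src a)` matrix over `K`. -/
abbrev RepSpace := Coords Q d → K

/-- `RepSpace` carries the Zariski topology. -/
noncomputable instance instRepTop : TopologicalSpace (RepSpace Q d K) :=
  zariskiTopology (Coords Q d) K

/-- The underlying `K`-vector space `⊕ᵢ K^{dᵢ}` of any `d`-dimensional representation. -/
abbrev Carrier := (Σ i : Fin Q.n, Fin (d i)) → K

/-- The projection onto the component of the `i`-th vertex (action of the primitive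
idempotent `eᵢ`). -/
def proj (i : Fin Q.n) : Carrier Q d K →ₗ[K] Carrier Q d K where
  toFun m := fun jv => if jv.1 = i then m jv else 0
  map_add' u v := by
    funext jv; by_cases h : jv.1 = i <;> simp [h]
  map_smul' c u := by
    funext jv; by_cases h : jv.1 = i <;> simp [h]

/-- The action of the arrow `a` on the carrier space of the representation `x`. -/
noncomputable def arrowMap (x : RepSpace Q d K) (a : Fin Q.numArrows) :
    Carrier Q d K →ₗ[K] Carrier Q d K where
  toFun m := fun jv =>
    if h : jv.1 = Q.tgt a then
      ∑ w : Fin (d (Q.src a)), x ⟨a, (Fin.cast (congrArg d h) jv.2, w)⟩ * m ⟨Q.src a, w⟩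
    else 0
  map_add' u v := by
    funext jv
    by_cases h : jv.1 = Q.tgt a <;> simp [h, mul_add, Finset.sum_add_distrib]
  map_smul' c u := by
    funext jv
    by_cases h : jv.1 = Q.tgt a <;>
      simp [h, Finset.mul_sum, mul_comm, mul_left_comm, mul_assoc]

/-- The action of a word `w = [a_k, …, a_1]` of arrows on the representation `x`
(the arrow `a_1` acts first; non-composable words act as `0`). -/
noncomputable def wordMap (x : RepSpace Q d K) (w : List (Fin Q.numArrows)) :
    Module.End K (Carrier Q d K) :=
  (w.map fun a => (arrowMap Q d K x a : Module.End K (Carrier Q d K))).prod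

/-- The submodule `J^l · M_x` of the module `M_x`: the sum of the images of all words of
arrows of length `l` (for an admissible ideal, the radical acts through the arrows). -/
noncomputable def radPow (x : RepSpace Q d K) (l : ℕ) : Submodule K (Carrier Q d K) :=
  ⨆ w : {w : List (Fin Q.numArrows) // w.length = l},
    LinearMap.range (wordMap Q d K x w.1)

/-- The socle series of `M_x`: `socPow x l = soc_l(M_x)`. -/
noncomputable def socPow (x : RepSpace Q d K) : ℕ → Submodule K (Carrier Q d K)
  | 0 => ⨅ a, LinearMap.ker (arrowMap Q d K x a)
  | (l+1) => ⨅ a, (socPow x l).comap (arrowMap Q d K x a)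

/-- The dimension, at the vertex `i`, of a (vertex-graded) subspace `N`. -/
noncomputable def vdim (N : Submodule K (Carrier Q d K)) (i : Fin Q.n) : ℕ :=
  Module.finrank K (N.map (proj Q d K i))

/-- The radical layering `S(M_x) = (M/JM, JM/J²M, …, J^L M/J^{L+1} M)` of the module `M_x`,
recorded through the dimension vectors of its semisimple layers. -/
noncomputable def radLayering (L : ℕ) (x : RepSpace Q d K) :
    Fin (L+1) → Fin Q.n → ℕ :=
  fun l i => vdim Q d K (radPow Q d K x l) i - vdim Q d K (radPow Q d K x (l+1)) i

/-- The socle layering `S*(M_x) = (soc₀M, soc₁M/soc₀M, …)` of the module `M_x`, recorded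
through the dimension vectors of its semisimple layers. -/
noncomputable def socLayering (L : ℕ) (x : RepSpace Q d K) :
    Fin (L+1) → Fin Q.n → ℕ :=
  fun l i => vdim Q d K (socPow Q d K x l) i -
    (if (l : ℕ) = 0 then 0 else vdim Q d K (socPow Q d K x ((l : ℕ) - 1)) i)

end QuiverData

/-- The dominance order on semisimple sequences (recorded as sequences of dimension
vectors): `dominates S S'` means `S ≤ S'`, i.e. `⊕_{j≤l} S_j ⊆ ⊕_{j≤l} S'_j` for all `l`. -/
def dominates {n L : ℕ} (S S' : Fin (L+1) → Fin n → ℕ) : Prop :=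
  ∀ (l : Fin (L+1)) (i : Fin n),
    ∑ j ∈ Finset.univ.filter (fun j => j ≤ l), S j i ≤
      ∑ j ∈ Finset.univ.filter (fun j => j ≤ l), S' j i

/-- A semisimple sequence has dimension vector `d` if its layers' dimension vectors sum
to `d`. -/
def hasDimVec {n L : ℕ} (S : Fin (L+1) → Fin n → ℕ) (d : Fin n → ℕ) : Prop :=
  ∀ i, ∑ l, S l i = d i

namespace QuiverData

variable (Q : QuiverData) (d : Fin Q.n → ℕ) (K : Type) [Field K]

/-- Evaluation of a formal noncommutative polynomial in the vertices (`Sum.inl`) and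
arrows (`Sum.inr`) of `Q` on the representation `x`; an element of the path algebra `KQ`
is represented by such a polynomial. -/
noncomputable def evalRel (x : RepSpace Q d K) :
    FreeAlgebra K (Fin Q.n ⊕ Fin Q.numArrows) →ₐ[K] Module.End K (Carrier Q d K) :=
  FreeAlgebra.lift K
    (Sum.elim (fun i => (proj Q d K i : Module.End K (Carrier Q d K)))
      (fun a => (arrowMap Q d K x a : Module.End K (Carrier Q d K))))

/-- The affine variety `Rep_d(Λ)` for `Λ = KQ/I`, where the ideal `I` is generated by the
set `R` of relations: the set of points of `RepSpace` annihilating every relation. -/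
def RepVar (R : Set (FreeAlgebra K (Fin Q.n ⊕ Fin Q.numArrows))) :
    Set (RepSpace Q d K) :=
  {x | ∀ r ∈ R, evalRel Q d K x r = 0}

/-- The affine variety `Rep_d(Λ)` for the truncated path algebra
`Λ = KQ/⟨all paths of length L+1⟩`. -/
def TruncRepVar (L : ℕ) : Set (RepSpace Q d K) :=
  {x | ∀ w : List (Fin Q.numArrows), w.length = L + 1 → wordMap Q d K x w = 0}

/-- A submodule of `M_x`, i.e. a subspace stable under the arrows and the vertex
idempotents. -/
def Stable (x : RepSpace Q d K) (N : Submodule K (Carrier Q d K)) : Prop :=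
  (∀ a, N.map (arrowMap Q d K x a) ≤ N) ∧ ∀ i, N.map (proj Q d K i) ≤ N

/-- A submodule `N` of `M_x` is indecomposable (as a module). -/
def IndecompSub (x : RepSpace Q d K) (N : Submodule K (Carrier Q d K)) : Prop :=
  N ≠ ⊥ ∧ ∀ N₁ N₂ : Submodule K (Carrier Q d K),
    Stable Q d K x N₁ → Stable Q d K x N₂ → N₁ ≤ N → N₂ ≤ N →
    N₁ ⊔ N₂ = N → N₁ ⊓ N₂ = ⊥ → N₁ = ⊥ ∨ N₂ = ⊥

/-- The module `M_x` is indecomposable. -/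
def IndecompRep (x : RepSpace Q d K) : Prop :=
  IndecompSub Q d K x ⊤

/-- The module `M_x` is uniserial: its submodules form a chain. -/
def UniserialRep (x : RepSpace Q d K) : Prop :=
  ∀ N₁ N₂ : Submodule K (Carrier Q d K),
    Stable Q d K x N₁ → Stable Q d K x N₂ → N₁ ≤ N₂ ∨ N₂ ≤ N₁

/-- `M_x` decomposes as a direct sum of `s` indecomposable submodules whose dimension
vectors are `D 0, …, D (s-1)`. -/
def DecompWith (x : RepSpace Q d K) (s : ℕ) (D : Fin s → Fin Q.n → ℕ) : Prop :=
  ∃ N : Fin s → Submodule K (Carrier Q d K),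
    (∀ r, Stable Q d K x (N r)) ∧
    (∀ r, Disjoint (N r) (⨆ t, ⨆ (_ : t ≠ r), N t)) ∧
    (⨆ r, N r) = ⊤ ∧
    (∀ r, IndecompSub Q d K x (N r)) ∧
    ∀ r i, vdim Q d K (N r) i = D r i

/-- A homomorphism of representations `M_x → M_y` (for possibly different dimension
vectors): a linear map commuting with the arrow actions and the vertex projections. -/
def RepHom (dx dy : Fin Q.n → ℕ) (x : RepSpace Q dx K) (y : RepSpace Q dy K)
    (φ : Carrier Q dx K →ₗ[K] Carrier Q dy K) : Prop :=
  (∀ a, φ ∘ₗ arrowMap Q dx K x a = arrowMap Q dy K y a ∘ₗ φ) ∧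
  ∀ i, φ ∘ₗ proj Q dx K i = proj Q dy K i ∘ₗ φ

/-- The submodule `N` of `M_x` is isomorphic, as a representation, to `M_y`. -/
def SubrepIso (dy : Fin Q.n → ℕ) (x : RepSpace Q d K)
    (N : Submodule K (Carrier Q d K)) (y : RepSpace Q dy K) : Prop :=
  ∃ φ : Carrier Q d K →ₗ[K] Carrier Q dy K,
    N ⊓ LinearMap.ker φ = ⊥ ∧ N.map φ = ⊤ ∧
    (∀ a, ∀ m ∈ N, φ (arrowMap Q d K x a m) = arrowMap Q dy K y a (φ m)) ∧
    (∀ i, ∀ m ∈ N, φ (proj Q d K i m) = proj Q dy K i (φ m))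

/-- The representations `M_x` and `M_y` are isomorphic; the isomorphism classes are
exactly the orbits of the `GL(d)`-action. -/
def IsoRep (x y : RepSpace Q d K) : Prop :=
  ∃ φ : Carrier Q d K ≃ₗ[K] Carrier Q d K,
    (∀ a m, φ (arrowMap Q d K x a m) = arrowMap Q d K y a (φ m)) ∧
    ∀ i m, φ (proj Q d K i m) = proj Q d K i (φ m)

/-- The `GL(d)`-orbit of the point `x`, i.e. the set of points encoding modules
isomorphic to `M_x`. -/
def orbitSet (x : RepSpace Q d K) : Set (RepSpace Q d K) :=
  {y | IsoRep Q d K x y}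

/-- Given a family `P` of varieties `Rep_dv(Λ)` (one for every dimension vector `dv`),
`Ext¹_Λ(M_x, M_y) = 0`: every extension `0 → M_y → E → M_x → 0` of `Λ`-modules splits. -/
def Ext1Zero (P : ∀ dv : Fin Q.n → ℕ, Set (RepSpace Q dv K))
    (dx dy : Fin Q.n → ℕ) (x : RepSpace Q dx K) (y : RepSpace Q dy K) : Prop :=
  ∀ z ∈ P (fun i => dx i + dy i),
    ∀ (ι : Carrier Q dy K →ₗ[K] Carrier Q (fun i => dx i + dy i) K)
      (π : Carrier Q (fun i => dx i + dy i) K →ₗ[K] Carrier Q dx K),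
      RepHom Q K dy (fun i => dx i + dy i) y z ι →
      RepHom Q K (fun i => dx i + dy i) dx z x π →
      Function.Injective ι → Function.Surjective π →
      LinearMap.ker π = LinearMap.range ι →
      ∃ σ : Carrier Q dx K →ₗ[K] Carrier Q (fun i => dx i + dy i) K,
        RepHom Q K dx (fun i => dx i + dy i) x z σ ∧ π ∘ₗ σ = LinearMap.id

/-- The direct sum `C₁ ⊕ ⋯ ⊕ C_s` of subvarieties `C_r ⊆ Rep_{D r}(Λ)`: the set of
points `x ∈ Rep_d(Λ)` whose module decomposes as `M_x ≅ ⊕_r M^{(r)}` with `M^{(r)}`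
encoded by a point of `C_r`. -/
def DirectSumSet (s : ℕ) (D : Fin s → Fin Q.n → ℕ)
    (Cs : ∀ r : Fin s, Set (RepSpace Q (D r) K)) : Set (RepSpace Q d K) :=
  {x | ∃ N : Fin s → Submodule K (Carrier Q d K),
    (∀ r, Stable Q d K x (N r)) ∧
    (∀ r, Disjoint (N r) (⨆ t, ⨆ (_ : t ≠ r), N t)) ∧
    (⨆ r, N r) = ⊤ ∧
    ∀ r, ∃ y ∈ Cs r, SubrepIso Q d K (D r) x (N r) y}

/-- The endomorphism space `End_Λ(M_x)` of the module `M_x`. -/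
def endSpace (x : RepSpace Q d K) :
    Submodule K (Carrier Q d K →ₗ[K] Carrier Q d K) where
  carrier := {φ | RepHom Q K d d x x φ}
  add_mem' := by
    intro φ ψ hφ hψ
    exact ⟨fun a => by rw [LinearMap.add_comp, LinearMap.comp_add, hφ.1 a, hψ.1 a],
      fun i => by rw [LinearMap.add_comp, LinearMap.comp_add, hφ.2 i, hψ.2 i]⟩
  zero_mem' := by
    exact ⟨fun a => by simp, fun i => by simp⟩
  smul_mem' := by
    intro c φ hφ
    exact ⟨fun a => by rw [LinearMap.smul_comp, LinearMap.comp_smul, hφ.1 a],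
      fun i => by rw [LinearMap.smul_comp, LinearMap.comp_smul, hφ.2 i]⟩

/-- A word of arrows is a (composable) path when read in function-composition order. -/
def IsPathWord (w : List (Fin Q.numArrows)) : Prop :=
  List.Chain' (fun a b => Q.src a = Q.tgt b) w

/-- The quiver `Q` has no oriented cycles. -/
def Acyclic : Prop :=
  ∀ (a : Fin Q.numArrows) (w : List (Fin Q.numArrows)),
    IsPathWord Q (a :: w) →
      Q.tgt a ≠ Q.src ((a :: w).getLast (List.cons_ne_nil a w))

/-- A filtration `M_x = F 0 ⊇ F 1 ⊇ ⋯ ⊇ F (L+1) = 0` by submodules which is governed by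
the semisimple sequence `S`: each layer `F l / F (l+1)` is semisimple, isomorphic to `S l`. -/
def Governed (L : ℕ) (x : RepSpace Q d K) (S : Fin (L+1) → Fin Q.n → ℕ)
    (F : Fin (L+2) → Submodule K (Carrier Q d K)) : Prop :=
  F 0 = ⊤ ∧ F (Fin.last (L+1)) = ⊥ ∧
  (∀ l : Fin (L+1), F l.succ ≤ F l.castSucc) ∧
  (∀ (l : Fin (L+2)) (i : Fin Q.n), (F l).map (proj Q d K i) ≤ F l) ∧
  (∀ (l : Fin (L+1)) (a : Fin Q.numArrows),
      (F l.castSucc).map (arrowMap Q d K x a) ≤ F l.succ) ∧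
  ∀ (l : Fin (L+1)) (i : Fin Q.n),
      vdim Q d K (F l.castSucc) i = S l i + vdim Q d K (F l.succ) i

/-- `Filt S`: the set of points whose module has a filtration governed by `S`. -/
def FiltSet (L : ℕ) (S : Fin (L+1) → Fin Q.n → ℕ) : Set (RepSpace Q d K) :=
  {x | ∃ F, Governed Q d K L x S F}

/-- `Γ(M_x)`: the number of semisimple sequences which are realizable (i.e. occur as the
radical layering of a module in the variety `P`) and which govern some filtration of `M_x`. -/
noncomputable def gammaCount (L : ℕ) (P : Set (RepSpace Q d K))
    (x : RepSpace Q d K) : ℕ :=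
  Set.ncard {S : Fin (L+1) → Fin Q.n → ℕ |
    (∃ y ∈ P, radLayering Q d K L y = S) ∧ ∃ F, Governed Q d K L x S F}

/-- `Sstar` is the generic (= minimal, attained) socle layering of the modules in `W`. -/
def GenSoc (L : ℕ) (W : Set (RepSpace Q d K))
    (Sstar : Fin (L+1) → Fin Q.n → ℕ) : Prop :=
  (∀ x ∈ W, dominates Sstar (socLayering Q d K L x)) ∧
  ∃ x ∈ W, socLayering Q d K L x = Sstar

end QuiverData

namespace QuiverData

variable (Q : QuiverData)

/-- The `i`-th entry of the row vector `e·A` (over `ℤ`), where `A` is the adjacency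
matrix of `Q`: the sum of `e (src a)` over all arrows `a` ending at `i`. -/
def inflowZ (e : Fin Q.n → ℤ) (i : Fin Q.n) : ℤ :=
  ∑ a ∈ Finset.univ.filter (fun a => Q.tgt a = i), e (Q.src a)

/-- The `i`-th entry of the row vector `e·B` (over `ℤ`), where `B` is the transpose of
the adjacency matrix of `Q`. -/
def outflowZ (e : Fin Q.n → ℤ) (i : Fin Q.n) : ℤ :=
  ∑ a ∈ Finset.univ.filter (fun a => Q.src a = i), e (Q.tgt a)

/-- Partial sums `t⁽⁰⁾ + ⋯ + t⁽ˡ⁾` of the recursion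
`t⁽⁰⁾ = sup{0, d − d·A}`, `t⁽ˡ⁺¹⁾ = sup{0, (d − ∑_{k≤l} t⁽ᵏ⁾) − (d − ∑_{k≤l} t⁽ᵏ⁾)·A}`
(computed componentwise). -/
def cumLayer (dz : Fin Q.n → ℤ) : ℕ → Fin Q.n → ℤ
  | 0 => fun i => max 0 (dz i - inflowZ Q dz i)
  | (l+1) => fun i =>
      cumLayer dz l i +
        max 0 ((dz i - cumLayer dz l i) -
          inflowZ Q (fun j => dz j - cumLayer dz l j) i)

/-- The positive part `∑ᵢ eᵢ fᵢ` of the Euler form of `Q`. -/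
def eulerHomPart (e f : Fin Q.n → ℕ) : ℕ := ∑ i, e i * f i

/-- The negative part `∑_{α} e_{src α} f_{tgt α}` of the Euler form of `Q`, so that
`⟨e, f⟩ = eulerHomPart e f − eulerExtPart e f`. -/
def eulerExtPart (e f : Fin Q.n → ℕ) : ℕ :=
  ∑ a, e (Q.src a) * f (Q.tgt a)

end QuiverData

/-- The quiver with a single vertex and `r` loops. -/
def QuiverData.loopQuiver (r : ℕ) : QuiverData :=
  ⟨1, r, fun _ => 0, fun _ => 0⟩

namespace QuiverData

variable (Q : QuiverData) (d : Fin Q.n → ℕ) (K : Type) [Field K]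

/-- The variety `Rep_d(Λ)` for `Λ = KQ/⟨Rels⟩`, regarded as a topological space with the
(subspace) Zariski topology. -/
abbrev GenV (Rels : Set (FreeAlgebra K (Fin Q.n ⊕ Fin Q.numArrows))) :=
  {y : RepSpace Q d K // y ∈ RepVar Q d K Rels}

/-- The variety `Rep_d(Λ)` for the truncated path algebra
`Λ = KQ/⟨paths of length L+1⟩`, regarded as a topological space. -/
abbrev TruncV (L : ℕ) := {y : RepSpace Q d K // y ∈ TruncRepVar Q d K L}

end QuiverData

open QuiverData in
/-- The property that the irreducible component `C` of `Rep_d(Λ)` is the closure of the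
direct sum of indecomposable irreducible components `Cs r` of the varieties
`Rep_{D r}(Λ)` (CONTEXT for Statement 3). -/
def IsCanonicalDecomposition (K : Type) [Field K]
    (Q : QuiverData) (d : Fin Q.n → ℕ)
    (Rels : Set (FreeAlgebra K (Fin Q.n ⊕ Fin Q.numArrows)))
    (C : Set (GenV Q d K Rels)) (s : ℕ) (D : Fin s → Fin Q.n → ℕ)
    (Cs : ∀ r : Fin s, Set (GenV Q (D r) K Rels)) : Prop :=
  (∀ i, d i = ∑ r, D r i) ∧
  (∀ r, Cs r ∈ irreducibleComponents (GenV Q (D r) K Rels)) ∧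
  (∀ r, ∃ U, U ⊆ Cs r ∧ (∃ W, IsOpen W ∧ U = Cs r ∩ W) ∧ Cs r ⊆ closure U ∧
      ∀ y ∈ U, IndecompRep Q (D r) K y.1) ∧
  C = closure {x : GenV Q d K Rels |
      x.1 ∈ DirectSumSet Q d K s D (fun r => Subtype.val '' Cs r)}


namespace CBS
open MvPolynomial

attribute [local instance] zariskiTopology

section alg
variable {X ι κ K : Type} [Field K]

/-- polynomial functions on affine space -/
noncomputable def polyAlg (ι K : Type) [Field K] : Subalgebra K ((ι → K) → K) :=
  (MvPolynomial.aeval (R := K) (fun (i : ι) (x : ι → K) => x i)).range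

theorem mem_polyAlg {f : (ι → K) → K} :
    f ∈ polyAlg ι K ↔ ∃ p : MvPolynomial ι K, ∀ x, f x = eval x p := by
  have key : ∀ (p : MvPolynomial ι K) (x : ι → K),
      (MvPolynomial.aeval (R := K) (fun (i : ι) (x : ι → K) => x i) p) x = eval x p := by
    intro p x
    induction p using MvPolynomial.induction_on with
    | C a => simp
    | add p q hp hq => simp [hp, hq]
    | mul_X p i hp => simp [hp]
  constructor
  · rintro ⟨p, rfl⟩
    exact ⟨p, fun x => key p x⟩
  · rintro ⟨p, hp⟩
    exact ⟨p, by funext x; exact (key p x).trans (hp x).symm⟩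

theorem coord_mem (i : ι) : (fun x : ι → K => x i) ∈ polyAlg ι K :=
  mem_polyAlg.2 ⟨X i, by simp⟩

theorem const_mem (F : Subalgebra K (X → K)) (c : K) : (fun _ => c) ∈ F :=
  F.algebraMap_mem c

theorem mul_mem' (F : Subalgebra K (X → K)) {f g : X → K} (hf : f ∈ F) (hg : g ∈ F) :
    (fun x => f x * g x) ∈ F := F.mul_mem hf hg

theorem add_mem' (F : Subalgebra K (X → K)) {f g : X → K} (hf : f ∈ F) (hg : g ∈ F) :
    (fun x => f x + g x) ∈ F := F.add_mem hf hg

theorem sum_mem' (F : Subalgebra K (X → K)) {S : Type} (s : Finset S) {f : S → X → K}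
    (hf : ∀ i ∈ s, f i ∈ F) : (fun x => ∑ i ∈ s, f i x) ∈ F := by
  have := F.sum_mem hf
  convert this using 1
  funext x
  simp

theorem prod_mem' (F : Subalgebra K (X → K)) {S : Type} (s : Finset S) {f : S → X → K}
    (hf : ∀ i ∈ s, f i ∈ F) : (fun x => ∏ i ∈ s, f i x) ∈ F := by
  have := F.prod_mem hf
  convert this using 1
  funext x
  simp

theorem eval_mem (F : Subalgebra K (X → K)) (g : X → ι → K)
    (hg : ∀ i, (fun x => g x i) ∈ F) (p : MvPolynomial ι K) :
    (fun x => eval (g x) p) ∈ F := by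
  induction p using MvPolynomial.induction_on with
  | C a => simpa using const_mem F a
  | add p q hp hq => simpa using add_mem' F hp hq
  | mul_X p i hp => simpa using mul_mem' F hp (hg i)

theorem isOpen_ne (p : MvPolynomial ι K) : IsOpen {x : ι → K | eval x p ≠ 0} :=
  TopologicalSpace.isOpen_generateFrom_of_mem ⟨p, rfl⟩

theorem exists_basic {U : Set (ι → K)} (hU : IsOpen U) {x : ι → K} (hx : x ∈ U) :
    ∃ p : MvPolynomial ι K, eval x p ≠ 0 ∧ ∀ y, eval y p ≠ 0 → y ∈ U := by
  induction hU generalizing x with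
  | basic s hs =>
    obtain ⟨p, rfl⟩ := hs
    exact ⟨p, hx, fun y hy => hy⟩
  | univ => exact ⟨1, by simp, fun _ _ => trivial⟩
  | inter s t _ _ h1 h2 =>
    obtain ⟨p, hp, hp'⟩ := h1 hx.1
    obtain ⟨q, hq, hq'⟩ := h2 hx.2
    refine ⟨p * q, by simp [hp, hq], fun y hy => ?_⟩
    simp at hy
    exact ⟨hp' y hy.1, hq' y hy.2⟩
  | sUnion S _ h =>
    obtain ⟨s, hs, hxs⟩ := hx
    obtain ⟨p, hp, hp'⟩ := h s hs hxs
    exact ⟨p, hp, fun y hy => ⟨s, hs, hp' y hy⟩⟩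

theorem continuous_of_poly {f : (ι → K) → (κ → K)} (hf : ∀ k, (fun x => f x k) ∈ polyAlg ι K) :
    Continuous f := by
  refine continuous_generateFrom_iff.2 ?_
  rintro _ ⟨p, rfl⟩
  obtain ⟨q, hq⟩ := mem_polyAlg.1 (eval_mem (polyAlg ι K) f hf p)
  have : f ⁻¹' {x | eval x p ≠ 0} = {x | eval x q ≠ 0} := by
    ext x
    simp [← hq]
  rw [this]
  exact isOpen_ne q

theorem isClosed_eq_zero {f : (ι → K) → K} (hf : f ∈ polyAlg ι K) :
    IsClosed {x | f x = 0} := by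
  obtain ⟨p, hp⟩ := mem_polyAlg.1 hf
  rw [← isOpen_compl_iff]
  have : {x | f x = 0}ᶜ = {x | eval x p ≠ 0} := by
    ext x
    simp [hp]
  rw [this]
  exact isOpen_ne p

theorem isClosed_eq' {f g : (ι → K) → K} (hf : f ∈ polyAlg ι K) (hg : g ∈ polyAlg ι K) :
    IsClosed {x | f x = g x} := by
  have := isClosed_eq_zero ((polyAlg ι K).sub_mem hf hg)
  simpa [sub_eq_zero] using this

/-- a closed set is cut out by polynomials -/
theorem mem_closed_iff {Y : Set (ι → K)} (hY : IsClosed Y) {x : ι → K} :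
    x ∈ Y ↔ ∀ p : MvPolynomial ι K, (∀ y ∈ Y, eval y p = 0) → eval x p = 0 := by
  refine ⟨fun hx p hp => hp x hx, fun h => ?_⟩
  by_contra hx
  obtain ⟨p, hp, hp'⟩ := exists_basic hY.isOpen_compl hx
  refine hp (h p fun y hy => ?_)
  by_contra hne
  exact hp' y hne hy

theorem inducing_pt : Topology.IsInducing
    (pointToPoint : (ι → K) → PrimeSpectrum (MvPolynomial ι K)) := by
  constructor
  rw [PrimeSpectrum.isTopologicalBasis_basic_opens.eq_generateFrom, induced_generateFrom_eq]
  change TopologicalSpace.generateFrom _ = _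
  congr 1
  ext U
  constructor
  · rintro ⟨p, rfl⟩
    refine ⟨_, ⟨p, rfl⟩, ?_⟩
    ext x
    simp [pointToPoint, aeval_eq_eval]
  · rintro ⟨_, ⟨p, rfl⟩, rfl⟩
    refine ⟨p, ?_⟩
    ext x
    simp [pointToPoint, aeval_eq_eval]

theorem noetherian [Finite ι] : TopologicalSpace.NoetherianSpace (ι → K) :=
  inducing_pt.noetherianSpace

/-- Chevalley's theorem, in the form needed here. -/
theorem chevalley [IsAlgClosed K] [Finite ι] [Finite κ] {f : (ι → K) → (κ → K)}
    (hf : ∀ k, (fun x => f x k) ∈ polyAlg ι K) {Y : Set (ι → K)} (hY : IsClosed Y)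
    (hirr : IsIrreducible (f '' Y)) :
    ∃ p : MvPolynomial κ K, (∃ z ∈ f '' Y, eval z p ≠ 0) ∧
      ∀ z ∈ closure (f '' Y), eval z p ≠ 0 → z ∈ f '' Y := by
  choose q hq using fun k => mem_polyAlg.1 (hf k)
  let Φ : MvPolynomial κ K →ₐ[K] MvPolynomial ι K := aeval q
  have hΦ : ∀ (p : MvPolynomial κ K) (y : ι → K), eval y (Φ p) = eval (f y) p := by
    intro p y
    induction p using MvPolynomial.induction_on with
    | C a => simp [Φ]
    | add p q hp hq => simp [hp, hq]
    | mul_X p i hp => rw [map_mul, map_mul, hp]; simp [Φ, hq]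
  let J : Ideal (MvPolynomial ι K) := vanishingIdeal K Y
  have hfp : Φ.toRingHom.FinitePresentation := by
    apply RingHom.FinitePresentation.of_finiteType.1
    apply RingHom.FiniteType.of_comp_finiteType (f := C)
    have : Φ.toRingHom.comp C = (C : K →+* MvPolynomial ι K) := by
      ext a; simp [Φ]
    rw [this]
    have : Algebra.FiniteType K (MvPolynomial ι K) := inferInstance
    exact RingHom.finiteType_algebraMap.2 this
  have hZc : Topology.IsConstructible (PrimeSpectrum.zeroLocus (J : Set (MvPolynomial ι K))) := by
    rw [← Topology.isConstructible_compl]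
    exact (TopologicalSpace.NoetherianSpace.isCompact _).isConstructible
      (PrimeSpectrum.isClosed_zeroLocus _).isOpen_compl
  have hcon := PrimeSpectrum.isConstructible_comap_image hfp hZc
  obtain ⟨S, hS⟩ := PrimeSpectrum.exists_constructibleSetData_iff.2 hcon
  -- points in the image
  have h1 : ∀ y ∈ Y, pointToPoint (f y) ∈
      PrimeSpectrum.comap Φ.toRingHom '' (PrimeSpectrum.zeroLocus (J : Set (MvPolynomial ι K))) := by
    intro y hy
    refine ⟨pointToPoint y, ?_, ?_⟩
    · intro p hp
      simp [pointToPoint]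
      exact hp y hy
    · ext p
      simp [pointToPoint, aeval_eq_eval, hΦ]
  have h2 : ∀ z : κ → K, pointToPoint z ∈
      PrimeSpectrum.comap Φ.toRingHom '' (PrimeSpectrum.zeroLocus (J : Set (MvPolynomial ι K))) →
      z ∈ f '' Y := by
    rintro z ⟨P, hP, hPz⟩
    obtain ⟨M, hM, hPM⟩ := Ideal.exists_le_maximal P.asIdeal P.isPrime.ne_top
    obtain ⟨y, rfl⟩ := isMaximal_iff_eq_vanishingIdeal_singleton.1 hM
    refine ⟨y, ?_, ?_⟩
    · rw [mem_closed_iff hY]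
      intro p hp
      have : p ∈ J := fun y hy => by rw [aeval_eq_eval]; exact hp y hy
      simpa [aeval_eq_eval] using hPM (hP this)
    · funext k
      have : (X k - C (z k) : MvPolynomial κ K) ∈ (pointToPoint z : PrimeSpectrum (MvPolynomial κ K)).asIdeal := by
        simp [pointToPoint, aeval_eq_eval]
      rw [← hPz] at this
      have := hPM this
      rw [mem_vanishingIdeal_singleton_iff, aeval_eq_eval] at this
      have h3 := (hΦ (X k - C (z k)) y).symm.trans this
      simpa [sub_eq_zero] using h3
  -- cover by the finitely many pieces
  have h3 : f '' Y ⊆ ⋃ c ∈ S, closure (f '' Y ∩ {z | pointToPoint z ∈ c.toSet}) := by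
    rintro _ ⟨y, hy, rfl⟩
    have := h1 y hy
    rw [← hS] at this
    simp only [PrimeSpectrum.ConstructibleSetData.toSet, Set.mem_iUnion] at this
    obtain ⟨c, hc, hcy⟩ := this
    simp only [Set.mem_iUnion]
    exact ⟨c, hc, subset_closure ⟨⟨y, hy, rfl⟩, hcy⟩⟩
  have h4 : ∃ c ∈ S, f '' Y ⊆ closure (f '' Y ∩ {z | pointToPoint z ∈ c.toSet}) := by
    have := (isIrreducible_iff_sUnion_isClosed.1 hirr)
      (S.image fun c => closure (f '' Y ∩ {z | pointToPoint z ∈ c.toSet}))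
      (by simp) (by simpa using h3)
    simpa using this
  obtain ⟨c, hc, hcY⟩ := h4
  have hpt : ∀ (z : κ → K), pointToPoint z ∈ c.toSet ↔
      (∀ i, eval z (c.g i) = 0) ∧ eval z c.f ≠ 0 := by
    intro z
    simp [PrimeSpectrum.BasicConstructibleSetData.toSet, pointToPoint, PrimeSpectrum.mem_zeroLocus,
      Set.subset_def, aeval_eq_eval]
  refine ⟨c.f, ?_, ?_⟩
  · obtain ⟨z, hz⟩ := hirr.nonempty
    obtain ⟨w, hw⟩ : (f '' Y ∩ {z | pointToPoint z ∈ c.toSet}).Nonempty :=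
      closure_nonempty_iff.1 ⟨z, hcY hz⟩
    exact ⟨w, hw.1, ((hpt w).1 hw.2).2⟩
  · intro z hz hzf
    apply h2
    rw [← hS]
    simp only [PrimeSpectrum.ConstructibleSetData.toSet, Set.mem_iUnion]
    refine ⟨c, hc, (hpt z).2 ⟨fun i => ?_, hzf⟩⟩
    have hcl : IsClosed {z : κ → K | eval z (c.g i) = 0} :=
      isClosed_eq_zero (mem_polyAlg.2 ⟨c.g i, fun _ => rfl⟩)
    have : f '' Y ⊆ {z : κ → K | eval z (c.g i) = 0} :=
      hcY.trans (closure_minimal (fun w hw => ((hpt w).1 hw.2).1 i) hcl)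
    exact closure_minimal this hcl hz

end alg

section sep
variable {J : Type} [Fintype J] [DecidableEq J] {X : J → Type} [∀ j, TopologicalSpace (X j)]
  {Z : Type} [TopologicalSpace Z]

/-- two maps which agree on coordinates after moving in irreducible sets -/
theorem sep_irred {f g : (∀ j, X j) → Z}
    (hf : ∀ x j, Continuous fun t => f (Function.update x j t))
    (hg : ∀ x j, Continuous fun t => g (Function.update x j t))
    {S : ∀ j, Set (X j)} (hS : ∀ j, IsIrreducible (S j))
    {U V : Set Z} (hU : IsOpen U) (hV : IsOpen V)
    {x y : ∀ j, X j} (hx : ∀ j, x j ∈ S j) (hy : ∀ j, y j ∈ S j) (hxU : f x ∈ U) (hyV : g y ∈ V) :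
    ∃ z : ∀ j, X j, (∀ j, z j ∈ S j) ∧ f z ∈ U ∧ g z ∈ V := by
  have key : ∀ T : Finset J, ∃ x y : ∀ j, X j, (∀ j, x j ∈ S j) ∧ (∀ j, y j ∈ S j) ∧
      f x ∈ U ∧ g y ∈ V ∧ ∀ j ∈ T, x j = y j := by
    intro T
    induction T using Finset.induction_on with
    | empty => exact ⟨x, y, hx, hy, hxU, hyV, by simp⟩
    | insert r T hr ih =>
      obtain ⟨x, y, hx, hy, hxU, hyV, h⟩ := ih
      obtain ⟨t, ht, ht1, ht2⟩ := (hS r).isPreirreducible _ _ (hU.preimage (hf x r))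
        (hV.preimage (hg y r)) ⟨x r, hx r, by simpa using hxU⟩ ⟨y r, hy r, by simpa using hyV⟩
      refine ⟨Function.update x r t, Function.update y r t, ?_, ?_, ht1, ht2, ?_⟩
      · intro j
        by_cases hj : j = r
        · subst hj; simpa using ht
        · simpa [hj] using hx j
      · intro j
        by_cases hj : j = r
        · subst hj; simpa using ht
        · simpa [hj] using hy j
      · intro j hj
        by_cases hjr : j = r
        · subst hjr; simp
        · simp [hjr, h j (Finset.mem_of_mem_insert_of_ne hj hjr)]
  obtain ⟨x, y, hx, _, hxU, hyV, h⟩ := key Finset.univ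
  have : x = y := funext fun j => h j (Finset.mem_univ j)
  subst this
  exact ⟨x, hx, hxU, hyV⟩

theorem sep_closure {f : (∀ j, X j) → Z}
    (hf : ∀ x j, Continuous fun t => f (Function.update x j t))
    {S : ∀ j, Set (X j)} {x : ∀ j, X j} (hx : ∀ j, x j ∈ closure (S j)) :
    f x ∈ closure (f '' {y | ∀ j, y j ∈ S j}) := by
  rw [mem_closure_iff]
  intro U hU hxU
  have key : ∀ T : Finset J, ∃ x : ∀ j, X j, (∀ j, x j ∈ closure (S j)) ∧ f x ∈ U ∧
      ∀ j ∈ T, x j ∈ S j := by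
    intro T
    induction T using Finset.induction_on with
    | empty => exact ⟨x, hx, hxU, by simp⟩
    | insert r T hr ih =>
      obtain ⟨x, hx, hxU, h⟩ := ih
      obtain ⟨t, ht, htS⟩ := mem_closure_iff.1 (hx r) _ (hU.preimage (hf x r))
        (by simpa using hxU)
      refine ⟨Function.update x r t, ?_, ht, ?_⟩
      · intro j
        by_cases hj : j = r
        · subst hj; simpa using subset_closure htS
        · simpa [hj] using hx j
      · intro j hj
        by_cases hjr : j = r
        · subst hjr; simpa using htS
        · simpa [hjr] using h j (Finset.mem_of_mem_insert_of_ne hj hjr)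
  obtain ⟨x, _, hxU, h⟩ := key Finset.univ
  exact ⟨f x, hxU, x, fun j => h j (Finset.mem_univ j), rfl⟩

end sep
end CBS


namespace CBS
open QuiverData

section rep
variable {Q : QuiverData} {K : Type} [Field K] {d e : Fin Q.n → ℕ}

/-- graded linear maps -/
def Graded (φ : Carrier Q d K →ₗ[K] Carrier Q e K) : Prop :=
  ∀ i, φ ∘ₗ proj Q d K i = proj Q e K i ∘ₗ φ

theorem Graded.apply {φ : Carrier Q d K →ₗ[K] Carrier Q e K} (h : Graded φ) (i) (m) :
    φ (proj Q d K i m) = proj Q e K i (φ m) := LinearMap.congr_fun (h i) m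

theorem proj_apply (i : Fin Q.n) (m : Carrier Q d K) (jv) :
    proj Q d K i m jv = if jv.1 = i then m jv else 0 := rfl

theorem arrow_apply (x : RepSpace Q d K) (a) (m : Carrier Q d K) (jv) :
    arrowMap Q d K x a m jv = if h : jv.1 = Q.tgt a then
      ∑ w : Fin (d (Q.src a)), x ⟨a, (Fin.cast (congrArg d h) jv.2, w)⟩ * m ⟨Q.src a, w⟩
    else 0 := rfl

theorem arrow_apply_tgt (x : RepSpace Q d K) (a) (m : Carrier Q d K) (v) :
    arrowMap Q d K x a m ⟨Q.tgt a, v⟩ =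
      ∑ w : Fin (d (Q.src a)), x ⟨a, (v, w)⟩ * m ⟨Q.src a, w⟩ := by
  rw [arrow_apply, dif_pos rfl]
  rfl

theorem arrow_apply_ne (x : RepSpace Q d K) (a) (m : Carrier Q d K) {jv}
    (h : jv.1 ≠ Q.tgt a) : arrowMap Q d K x a m jv = 0 := by
  rw [arrow_apply, dif_neg h]

theorem proj_arrow (x : RepSpace Q d K) (a) (m : Carrier Q d K) :
    proj Q d K (Q.tgt a) (arrowMap Q d K x a m) = arrowMap Q d K x a m := by
  funext jv
  rw [proj_apply]
  split_ifs with h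
  · rfl
  · rw [arrow_apply_ne _ _ _ h]

theorem arrow_proj (x : RepSpace Q d K) (a) (m : Carrier Q d K) :
    arrowMap Q d K x a (proj Q d K (Q.src a) m) = arrowMap Q d K x a m := by
  funext jv
  simp [arrow_apply, proj_apply]

theorem sum_proj (m : Carrier Q d K) : ∑ i, proj Q d K i m = m := by
  funext jv
  simp [proj_apply, Finset.sum_apply]

theorem proj_proj (i j : Fin Q.n) (m : Carrier Q d K) :
    proj Q d K i (proj Q d K j m) = if i = j then proj Q d K i m else 0 := by
  funext jv
  by_cases h : i = j
  · subst h; simp +contextual [proj_apply]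
  · simp only [proj_apply, if_neg h]
    split_ifs with h1 h2
    · exact absurd (h1.symm.trans h2) h
    · rfl
    · rfl

/-- build a representation from endomorphisms -/
noncomputable def mk (T : Fin Q.numArrows → Module.End K (Carrier Q d K)) : RepSpace Q d K :=
  fun c => T c.1 (Pi.single ⟨Q.src c.1, c.2.2⟩ 1) ⟨Q.tgt c.1, c.2.1⟩

theorem arrow_mk (T : Fin Q.numArrows → Module.End K (Carrier Q d K))
    (h1 : ∀ a m, proj Q d K (Q.tgt a) (T a m) = T a m)
    (h2 : ∀ a m, T a (proj Q d K (Q.src a) m) = T a m) (a) :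
    arrowMap Q d K (mk T) a = T a := by
  refine LinearMap.ext fun m => ?_
  funext jv
  by_cases h : jv.1 = Q.tgt a
  · obtain ⟨j, v⟩ := jv
    dsimp at h
    subst h
    rw [arrow_apply_tgt, ← h2]
    have : proj Q d K (Q.src a) m =
        ∑ w, m ⟨Q.src a, w⟩ • (Pi.single (⟨Q.src a, w⟩ : Σ i : Fin Q.n, Fin (d i)) (1 : K) :
          Carrier Q d K) := by
      funext ⟨j, w⟩
      rw [proj_apply, Finset.sum_apply]
      by_cases hj : j = Q.src a
      · subst hj
        simp [Pi.single_apply]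
      · rw [if_neg hj, Finset.sum_eq_zero]
        intro w' _
        rw [Pi.smul_apply, Pi.single_apply, if_neg, smul_zero]
        intro h; exact hj (congrArg Sigma.fst h)
    rw [this, map_sum, Finset.sum_apply]
    refine Finset.sum_congr rfl fun w _ => ?_
    rw [map_smul, Pi.smul_apply, smul_eq_mul, mul_comm]
    rfl
  · rw [arrow_apply_ne _ _ _ h, ← h1, proj_apply, if_neg h]

theorem mk_arrow (x : RepSpace Q d K) : mk (fun a => arrowMap Q d K x a) = x := by
  funext ⟨a, v, w⟩
  simp only [mk]
  rw [arrow_apply_tgt, Finset.sum_eq_single w]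
  · simp
  · intro b _ hb
    rw [Pi.single_apply, if_neg, mul_zero]
    intro h
    simp at h
    exact hb h
  · simp

theorem arrow_inj {x y : RepSpace Q d K} (h : ∀ a, arrowMap Q d K x a = arrowMap Q d K y a) :
    x = y := by
  rw [← mk_arrow x, ← mk_arrow y]
  congr 1
  funext a
  exact h a

theorem _root_.QuiverData.RepHom.eval {x : RepSpace Q d K} {y : RepSpace Q e K}
    {φ : Carrier Q d K →ₗ[K] Carrier Q e K} (h : RepHom Q K d e x y φ)
    (r : FreeAlgebra K (Fin Q.n ⊕ Fin Q.numArrows)) (m) :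
    φ (evalRel Q d K x r m) = evalRel Q e K y r (φ m) := by
  induction r using FreeAlgebra.induction generalizing m with
  | grade0 c => simp
  | grade1 g =>
    cases g with
    | inl i => simpa [evalRel] using LinearMap.congr_fun (h.2 i) m
    | inr a => simpa [evalRel] using LinearMap.congr_fun (h.1 a) m
  | mul a b ha hb => simp [ha, hb]
  | add a b ha hb => simp [ha, hb]

theorem _root_.QuiverData.RepHom.comp {e' : Fin Q.n → ℕ} {x : RepSpace Q d K} {y : RepSpace Q e K}
    {z : RepSpace Q e' K}
    {φ : Carrier Q d K →ₗ[K] Carrier Q e K} (h : RepHom Q K d e x y φ)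
    {ψ : Carrier Q e K →ₗ[K] Carrier Q e' K} (h' : RepHom Q K e e' y z ψ) :
    RepHom Q K d e' x z (ψ ∘ₗ φ) := by
  refine ⟨fun a => ?_, fun i => ?_⟩
  · rw [LinearMap.comp_assoc, h.1, ← LinearMap.comp_assoc, h'.1, LinearMap.comp_assoc]
  · rw [LinearMap.comp_assoc, h.2, ← LinearMap.comp_assoc, h'.2, LinearMap.comp_assoc]

theorem _root_.QuiverData.RepHom.inv {x : RepSpace Q d K} {y : RepSpace Q e K}
    {φ : Carrier Q d K →ₗ[K] Carrier Q e K} (h : RepHom Q K d e x y φ)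
    {ψ : Carrier Q e K →ₗ[K] Carrier Q d K} (h1 : φ ∘ₗ ψ = LinearMap.id)
    (h2 : ψ ∘ₗ φ = LinearMap.id) :
    RepHom Q K e d y x ψ := by
  have h1' : ∀ m, φ (ψ m) = m := fun m => LinearMap.congr_fun h1 m
  have h2' : ∀ m, ψ (φ m) = m := fun m => LinearMap.congr_fun h2 m
  refine ⟨fun a => LinearMap.ext fun m => ?_, fun i => LinearMap.ext fun m => ?_⟩
  · have := LinearMap.congr_fun (h.1 a) (ψ m)
    simp only [LinearMap.comp_apply, h1'] at this ⊢
    rw [← this, h2']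
  · have := LinearMap.congr_fun (h.2 i) (ψ m)
    simp only [LinearMap.comp_apply, h1'] at this ⊢
    rw [← this, h2']

theorem repHom_id (x : RepSpace Q d K) : RepHom Q K d d x x LinearMap.id :=
  ⟨fun _ => rfl, fun _ => rfl⟩

theorem _root_.QuiverData.RepHom.add {x : RepSpace Q d K} {y : RepSpace Q e K}
    {φ ψ : Carrier Q d K →ₗ[K] Carrier Q e K} (hφ : RepHom Q K d e x y φ)
    (hψ : RepHom Q K d e x y ψ) : RepHom Q K d e x y (φ + ψ) :=
  ⟨fun a => by rw [LinearMap.add_comp, LinearMap.comp_add, hφ.1 a, hψ.1 a],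
      fun i => by rw [LinearMap.add_comp, LinearMap.comp_add, hφ.2 i, hψ.2 i]⟩

theorem _root_.QuiverData.RepHom.sub {x : RepSpace Q d K} {y : RepSpace Q e K}
    {φ ψ : Carrier Q d K →ₗ[K] Carrier Q e K} (hφ : RepHom Q K d e x y φ)
    (hψ : RepHom Q K d e x y ψ) : RepHom Q K d e x y (φ - ψ) :=
  ⟨fun a => by rw [LinearMap.sub_comp, LinearMap.comp_sub, hφ.1 a, hψ.1 a],
      fun i => by rw [LinearMap.sub_comp, LinearMap.comp_sub, hφ.2 i, hψ.2 i]⟩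

theorem _root_.QuiverData.RepHom.sum {x : RepSpace Q d K} {y : RepSpace Q e K} {S : Type} (s : Finset S)
    {φ : S → Carrier Q d K →ₗ[K] Carrier Q e K} (hφ : ∀ i, RepHom Q K d e x y (φ i)) :
    RepHom Q K d e x y (∑ i ∈ s, φ i) := by
  classical
  induction s using Finset.induction_on with
  | empty => rw [Finset.sum_empty]; exact ⟨fun _ => by simp, fun _ => by simp⟩
  | insert a s ha ih => rw [Finset.sum_insert ha]; exact (hφ a).add ih

theorem _root_.QuiverData.RepHom.pow {x : RepSpace Q d K} {u : Module.End K (Carrier Q d K)}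
    (h : RepHom Q K d d x x u) (n : ℕ) :
    RepHom Q K d d x x (u ^ n : Module.End K (Carrier Q d K)) := by
  induction n with
  | zero => exact repHom_id x
  | succ n ih => rw [pow_succ]; exact RepHom.comp h ih

theorem stable_ker {x : RepSpace Q d K} {y : RepSpace Q e K}
    {φ : Carrier Q d K →ₗ[K] Carrier Q e K} (h : RepHom Q K d e x y φ) :
    Stable Q d K x (LinearMap.ker φ) := by
  constructor
  · rintro a _ ⟨m, hm, rfl⟩
    have := LinearMap.congr_fun (h.1 a) m
    simp only [LinearMap.comp_apply] at this
    rw [LinearMap.mem_ker, this, LinearMap.mem_ker.1 hm, map_zero]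
  · rintro i _ ⟨m, hm, rfl⟩
    have := LinearMap.congr_fun (h.2 i) m
    simp only [LinearMap.comp_apply] at this
    rw [LinearMap.mem_ker, this, LinearMap.mem_ker.1 hm, map_zero]

theorem stable_range {x : RepSpace Q d K} {y : RepSpace Q e K}
    {φ : Carrier Q d K →ₗ[K] Carrier Q e K} (h : RepHom Q K d e x y φ) :
    Stable Q e K y (LinearMap.range φ) := by
  constructor
  · rintro a _ ⟨_, ⟨m, rfl⟩, rfl⟩
    exact ⟨_, LinearMap.congr_fun (h.1 a) m⟩
  · rintro i _ ⟨_, ⟨m, rfl⟩, rfl⟩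
    exact ⟨_, LinearMap.congr_fun (h.2 i) m⟩

/-! ### Krull-Schmidt -/

theorem fitting {x : RepSpace Q d K} (hx : IndecompRep Q d K x)
    {u : Module.End K (Carrier Q d K)} (h : RepHom Q K d d x x u) :
    IsNilpotent u ∨ IsUnit u := by
  obtain ⟨n, hn⟩ := (u.eventually_isCompl_ker_pow_range_pow).exists_forall_of_atTop
  have hc := hn (n + 1) (Nat.le_succ n)
  rcases hx.2 _ _ (stable_ker (h.pow (n+1))) (stable_range (h.pow (n+1))) le_top le_top
    hc.sup_eq_top hc.inf_eq_bot with h0 | h0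
  · right
    have hu : IsUnit (u ^ (n+1)) := (LinearMap.isUnit_iff_ker_eq_bot _).2 h0
    exact (isUnit_pow_iff (Nat.succ_ne_zero n)).1 hu
  · left
    exact ⟨n+1, LinearMap.range_eq_bot.1 h0⟩

theorem exists_unit_of_sum {x : RepSpace Q d K} (hx : IndecompRep Q d K x)
    {S : Type} (s : Finset S) {u : S → Module.End K (Carrier Q d K)}
    (h : ∀ i, RepHom Q K d d x x (u i)) (hs : IsUnit (∑ i ∈ s, u i)) :
    ∃ i ∈ s, IsUnit (u i) := by
  classical
  induction s using Finset.induction_on with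
  | empty =>
    exfalso
    rw [Finset.sum_empty, isUnit_zero_iff] at hs
    apply hx.1
    rw [eq_bot_iff]
    intro m _
    have := LinearMap.congr_fun hs m
    exact this.symm
  | insert a s ha ih =>
    rw [Finset.sum_insert ha] at hs
    obtain ⟨w, hw⟩ := hs
    have hwh : RepHom Q K d d x x (w : Module.End K (Carrier Q d K)) := by
      rw [hw]; exact (h a).add (RepHom.sum s h)
    have hwi : RepHom Q K d d x x ((w⁻¹ : (Module.End K (Carrier Q d K))ˣ) :
      Module.End K (Carrier Q d K)) := hwh.inv w.mul_inv w.inv_mul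
    set w' : Module.End K (Carrier Q d K) := ((w⁻¹ : (Module.End K (Carrier Q d K))ˣ) :
      Module.End K (Carrier Q d K)) with hw'
    have h1 : RepHom Q K d d x x (w' * u a) := (h a).comp hwi
    have e1 : w' * u a + w' * ∑ i ∈ s, u i = 1 := by
      rw [← mul_add, ← hw]; exact w.inv_mul
    rcases fitting hx h1 with hn | hu
    · have h2 : IsUnit (w' * ∑ i ∈ s, u i) := by
        rw [← eq_sub_iff_add_eq'] at e1
        rw [e1]
        exact hn.isUnit_one_sub
      have h3 : IsUnit (∑ i ∈ s, u i) := by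
        have := w.isUnit.mul h2
        rwa [← mul_assoc, hw', w.mul_inv, one_mul] at this
      obtain ⟨i, hi, hi'⟩ := ih h3
      exact ⟨i, Finset.mem_insert_of_mem hi, hi'⟩
    · refine ⟨a, Finset.mem_insert_self a s, ?_⟩
      have := w.isUnit.mul hu
      rwa [← mul_assoc, hw', w.mul_inv, one_mul] at this

theorem iso_of_comp_unit {x : RepSpace Q d K} {y : RepSpace Q e K} (hx : IndecompRep Q d K x)
    (hy : IndecompRep Q e K y)
    {f : Carrier Q d K →ₗ[K] Carrier Q e K} (hf : RepHom Q K d e x y f)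
    {g : Carrier Q e K →ₗ[K] Carrier Q d K} (hg : RepHom Q K e d y x g)
    (hu : IsUnit (g ∘ₗ f : Module.End K (Carrier Q d K))) :
    ∃ f' : Carrier Q e K →ₗ[K] Carrier Q d K, RepHom Q K e d y x f' ∧
      f ∘ₗ f' = LinearMap.id ∧ f' ∘ₗ f = LinearMap.id := by
  have hbij := (Module.End.isUnit_iff _).1 hu
  have hinj : Function.Injective f := by
    have := hbij.1
    rw [LinearMap.coe_comp] at this
    exact this.of_comp
  have hcompl : IsCompl (LinearMap.range f) (LinearMap.ker g) := by
    constructor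
    · rw [Submodule.disjoint_def]
      rintro _ ⟨m, rfl⟩ hm
      have : m = 0 := hbij.1 (by simpa using hm)
      simp [this]
    · rw [codisjoint_iff, eq_top_iff]
      intro n _
      obtain ⟨m, hm⟩ := hbij.2 (g n)
      rw [Submodule.mem_sup]
      refine ⟨f m, ⟨m, rfl⟩, n - f m, ?_, by abel⟩
      rw [LinearMap.mem_ker, map_sub, sub_eq_zero]
      exact hm.symm
  have hsurj : Function.Surjective f := by
    rcases hy.2 _ _ (stable_range hf) (stable_ker hg) le_top le_top
      hcompl.sup_eq_top hcompl.inf_eq_bot with h0 | h0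
    · exfalso
      apply hx.1
      rw [eq_bot_iff]
      intro m _
      have : f m ∈ LinearMap.range f := ⟨m, rfl⟩
      rw [h0] at this
      exact hinj (by simpa using this)
    · rw [h0] at hcompl
      exact LinearMap.range_eq_top.1 (by simpa using hcompl.sup_eq_top)
  let E := LinearEquiv.ofBijective f ⟨hinj, hsurj⟩
  have e1 : f ∘ₗ (E.symm : Carrier Q e K →ₗ[K] Carrier Q d K) = LinearMap.id :=
    LinearMap.ext fun m => E.apply_symm_apply m
  have e2 : (E.symm : Carrier Q e K →ₗ[K] Carrier Q d K) ∘ₗ f = LinearMap.id :=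
    LinearMap.ext fun m => E.symm_apply_apply m
  exact ⟨E.symm, hf.inv e1 e2, e1, e2⟩

theorem krull_schmidt (N : ℕ) : ∀ (J J' : Type) [Fintype J] [Fintype J'] [DecidableEq J]
    [DecidableEq J']
    (D : J → Fin Q.n → ℕ) (D' : J' → Fin Q.n → ℕ) (y : ∀ j, RepSpace Q (D j) K)
    (y' : ∀ j, RepSpace Q (D' j) K)
    (f : ∀ j' j, Carrier Q (D j) K →ₗ[K] Carrier Q (D' j') K)
    (g : ∀ j j', Carrier Q (D' j') K →ₗ[K] Carrier Q (D j) K),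
    Fintype.card J = N →
    (∀ j, IndecompRep Q (D j) K (y j)) → (∀ j, IndecompRep Q (D' j) K (y' j)) →
    (∀ j' j, RepHom Q K _ _ (y j) (y' j') (f j' j)) →
    (∀ j j', RepHom Q K _ _ (y' j') (y j) (g j j')) →
    (∀ j, ∑ j', g j j' ∘ₗ f j' j = LinearMap.id) →
    (∀ j k, j ≠ k → ∑ j', g j j' ∘ₗ f j' k = 0) →
    (∀ j', ∑ j, f j' j ∘ₗ g j j' = LinearMap.id) →
    (∀ j' k', j' ≠ k' → ∑ j, f j' j ∘ₗ g j k' = 0) →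
    ∃ σ : J ≃ J', ∀ j, ∃ (φ : Carrier Q (D j) K →ₗ[K] Carrier Q (D' (σ j)) K)
      (ψ : Carrier Q (D' (σ j)) K →ₗ[K] Carrier Q (D j) K),
      RepHom Q K _ _ (y j) (y' (σ j)) φ ∧ φ ∘ₗ ψ = LinearMap.id ∧ ψ ∘ₗ φ = LinearMap.id := by
  induction N with
  | zero =>
    intro J J' _ _ _ _ D D' y y' f g hN hy hy' hf hg h1 h2 h3 h4
    have hJ : IsEmpty J := Fintype.card_eq_zero_iff.1 hN
    have hJ' : IsEmpty J' := by
      constructor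
      intro j'
      apply (hy' j').1
      rw [eq_bot_iff]
      intro m _
      have := LinearMap.congr_fun (h3 j') m
      simp at this
      simpa using this.symm
    exact ⟨Equiv.equivOfIsEmpty J J', fun j => hJ.elim j⟩
  | succ N ih =>
    intro J J' _ _ _ _ D D' y y' f g hN hy hy' hf hg h1 h2 h3 h4
    obtain ⟨j0⟩ : Nonempty J := Fintype.card_pos_iff.1 (by omega)
    obtain ⟨k0, -, hk0⟩ := exists_unit_of_sum (hy j0) Finset.univ
      (u := fun j' => g j0 j' ∘ₗ f j' j0) (fun j' => (hf j' j0).comp (hg j0 j'))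
      (by rw [h1]; exact isUnit_one)
    obtain ⟨a', ha', haa', ha'a⟩ := iso_of_comp_unit (hy j0) (hy' k0) (hf k0 j0) (hg j0 k0) hk0
    have spl : ∀ {M : Type} [AddCommGroup M] (F : J → M), ∑ j, F j =
        F j0 + ∑ j : {j // j ≠ j0}, F j := fun F =>
      Fintype.sum_eq_add_sum_subtype_ne F j0
    have spl' : ∀ {M : Type} [AddCommGroup M] (F : J' → M), ∑ j, F j =
        F k0 + ∑ j : {j // j ≠ k0}, F j := fun F =>
      Fintype.sum_eq_add_sum_subtype_ne F k0
    have A : ∀ j l, ∑ k : {k // k ≠ k0}, g j k ∘ₗ f k l =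
        (∑ k, g j k ∘ₗ f k l) - g j k0 ∘ₗ f k0 l := by
      intro j l; rw [spl']; abel
    have B : ∀ k l, ∑ j : {j // j ≠ j0}, f k j ∘ₗ g j l =
        (∑ j, f k j ∘ₗ g j l) - f k j0 ∘ₗ g j0 l := by
      intro j l; rw [spl]; abel
    have cL : ∀ (j l : J) , ∑ k : {k // k ≠ k0},
        g j k ∘ₗ (f k l - f k j0 ∘ₗ a' ∘ₗ f k0 l) =
        (∑ k : {k // k ≠ k0}, g j k ∘ₗ f k l) -
          (∑ k : {k // k ≠ k0}, g j k ∘ₗ f k j0) ∘ₗ a' ∘ₗ f k0 l := by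
      intro j l
      refine LinearMap.ext fun m => ?_
      simp [LinearMap.sum_apply, Finset.sum_sub_distrib]
    have cR : ∀ (k l : J') , ∑ j : {j // j ≠ j0},
        (f k j - f k j0 ∘ₗ a' ∘ₗ f k0 j) ∘ₗ g j l =
        (∑ j : {j // j ≠ j0}, f k j ∘ₗ g j l) -
          f k j0 ∘ₗ a' ∘ₗ (∑ j : {j // j ≠ j0}, f k0 j ∘ₗ g j l) := by
      intro j l
      refine LinearMap.ext fun m => ?_
      simp [LinearMap.sum_apply, Finset.sum_sub_distrib]
    have a1 : ∀ m, f k0 j0 (a' m) = m := fun m => LinearMap.congr_fun haa' m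
    have a2 : ∀ m, a' (f k0 j0 m) = m := fun m => LinearMap.congr_fun ha'a m
    obtain ⟨σ, hσ⟩ := ih {j // j ≠ j0} {k // k ≠ k0} (fun j => D j) (fun k => D' k)
      (fun j => y j) (fun k => y' k)
      (fun k j => f k j - f k j0 ∘ₗ a' ∘ₗ f k0 j) (fun j k => g j k)
      (by rw [Fintype.card_subtype_compl, hN]; simp)
      (fun j => hy j) (fun j => hy' j)
      (fun k j => (hf k j).sub (((hf k0 j).comp ha').comp (hf k j0)))
      (fun j k => hg j k)
      (by
        intro j
        rw [cL, A, A, h1, h2 _ _ j.2]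
        refine LinearMap.ext fun m => ?_
        simp [a1])
      (by
        intro j l hjl
        rw [cL, A, A, h2 _ _ j.2, h2 _ _ (fun h => hjl (Subtype.ext h))]
        refine LinearMap.ext fun m => ?_
        simp [a1])
      (by
        intro k
        rw [cR, B, B, h3, h4 _ _ k.2.symm]
        refine LinearMap.ext fun m => ?_
        simp [a2])
      (by
        intro k l hkl
        rw [cR, B, B, h4 _ _ (fun h => hkl (Subtype.ext h)), h4 _ _ l.2.symm]
        refine LinearMap.ext fun m => ?_
        simp [a2])
    refine ⟨(Equiv.optionSubtypeNe j0).symm.trans (σ.optionCongr.trans (Equiv.optionSubtypeNe k0)),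
      fun j => ?_⟩
    by_cases hj : j = j0
    · subst hj
      have e : ((Equiv.optionSubtypeNe j).symm.trans
          (σ.optionCongr.trans (Equiv.optionSubtypeNe k0))) j = k0 := by simp
      rw [e]
      exact ⟨f k0 j, a', hf _ _, haa', ha'a⟩
    · have e : ((Equiv.optionSubtypeNe j0).symm.trans
          (σ.optionCongr.trans (Equiv.optionSubtypeNe k0))) j = σ ⟨j, hj⟩ := by
        simp [Equiv.optionSubtypeNe_symm_of_ne hj]
      rw [e]
      exact hσ ⟨j, hj⟩

end rep
end CBS


namespace CBS
open QuiverData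

section bip
variable {Q : QuiverData} {K : Type} [Field K] {d : Fin Q.n → ℕ}
variable {J : Type} [Fintype J] {D : J → Fin Q.n → ℕ}

/-- graded biproduct data -/
structure IsBip (I : ∀ r, Carrier Q (D r) K →ₗ[K] Carrier Q d K)
    (P : ∀ r, Carrier Q d K →ₗ[K] Carrier Q (D r) K) : Prop where
  gI : ∀ r, Graded (I r)
  gP : ∀ r, Graded (P r)
  pi_same : ∀ r m, P r (I r m) = m
  pi_ne : ∀ r t, r ≠ t → ∀ m, P r (I t m) = 0
  total : ∀ m, ∑ r, I r (P r m) = m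

/-- the direct sum representation -/
noncomputable def bsum (I : ∀ r, Carrier Q (D r) K →ₗ[K] Carrier Q d K)
    (P : ∀ r, Carrier Q d K →ₗ[K] Carrier Q (D r) K) (y : ∀ r, RepSpace Q (D r) K) :
    RepSpace Q d K :=
  mk fun a => ∑ r, I r ∘ₗ arrowMap Q (D r) K (y r) a ∘ₗ P r

variable {I : ∀ r, Carrier Q (D r) K →ₗ[K] Carrier Q d K}
    {P : ∀ r, Carrier Q d K →ₗ[K] Carrier Q (D r) K}

theorem arrow_bsum (h : IsBip I P) (y : ∀ r, RepSpace Q (D r) K) (a) (m) :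
    arrowMap Q d K (bsum I P y) a m = ∑ r, I r (arrowMap Q (D r) K (y r) a (P r m)) := by
  unfold bsum
  rw [arrow_mk]
  · simp [LinearMap.sum_apply]
  · intro a m
    simp only [LinearMap.sum_apply, LinearMap.comp_apply, map_sum]
    refine Finset.sum_congr rfl fun r _ => ?_
    rw [← (h.gI r).apply, proj_arrow]
  · intro a m
    simp only [LinearMap.sum_apply, LinearMap.comp_apply]
    refine Finset.sum_congr rfl fun r _ => ?_
    rw [(h.gP r).apply, arrow_proj]

theorem homI (h : IsBip I P) (y : ∀ r, RepSpace Q (D r) K) (r) :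
    RepHom Q K _ _ (y r) (bsum I P y) (I r) := by
  refine ⟨fun a => LinearMap.ext fun m => ?_, h.gI r⟩
  rw [LinearMap.comp_apply, LinearMap.comp_apply, arrow_bsum h, Finset.sum_eq_single r]
  · rw [h.pi_same]
  · intro t _ ht
    rw [h.pi_ne t r ht, map_zero, map_zero]
  · simp

theorem homP (h : IsBip I P) (y : ∀ r, RepSpace Q (D r) K) (r) :
    RepHom Q K _ _ (bsum I P y) (y r) (P r) := by
  refine ⟨fun a => LinearMap.ext fun m => ?_, h.gP r⟩
  rw [LinearMap.comp_apply, LinearMap.comp_apply, arrow_bsum h, map_sum, Finset.sum_eq_single r]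
  · rw [h.pi_same]
  · intro t _ ht
    rw [h.pi_ne r t ht.symm]
  · simp

theorem eq_bsum (h : IsBip I P) {x : RepSpace Q d K} {y : ∀ r, RepSpace Q (D r) K}
    (hx : ∀ r a m, arrowMap Q d K x a (I r m) = I r (arrowMap Q (D r) K (y r) a m)) :
    x = bsum I P y := by
  apply arrow_inj
  intro a
  refine LinearMap.ext fun m => ?_
  rw [arrow_bsum h]
  conv_lhs => rw [← h.total m]
  rw [map_sum]
  exact Finset.sum_congr rfl fun r _ => hx r a _

theorem bsum_mem (h : IsBip I P) (Rels : Set (FreeAlgebra K (Fin Q.n ⊕ Fin Q.numArrows)))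
    (y : ∀ r, RepSpace Q (D r) K) :
    bsum I P y ∈ RepVar Q d K Rels ↔ ∀ r, y r ∈ RepVar Q (D r) K Rels := by
  constructor
  · intro hx r w hw
    refine LinearMap.ext fun m => ?_
    have := (homI h y r).eval w m
    rw [hx w hw] at this
    have h2 := congrArg (P r) this
    rw [h.pi_same] at h2
    simpa using h2
  · intro hy w hw
    refine LinearMap.ext fun m => ?_
    rw [← h.total (evalRel Q d K (bsum I P y) w m)]
    simp only [LinearMap.zero_apply]
    refine Finset.sum_eq_zero fun r _ => ?_
    rw [(homP h y r).eval, hy r w hw]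
    simp

/-- extension by zero from the vertex `i` -/
noncomputable def ext (d : Fin Q.n → ℕ) (K : Type) [Field K] (i : Fin Q.n) :
    (Fin (d i) → K) →ₗ[K] Carrier Q d K where
  toFun u := fun jv => if h : jv.1 = i then u (Fin.cast (congrArg d h) jv.2) else 0
  map_add' u v := by
    funext jv; by_cases h : jv.1 = i <;> simp [h]
  map_smul' c u := by
    funext jv; by_cases h : jv.1 = i <;> simp [h]

/-- restriction to the vertex `i` -/
noncomputable def res (d : Fin Q.n → ℕ) (K : Type) [Field K] (i : Fin Q.n) :
    Carrier Q d K →ₗ[K] (Fin (d i) → K) where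
  toFun m := fun v => m ⟨i, v⟩
  map_add' u v := rfl
  map_smul' c u := rfl

theorem res_ext (i : Fin Q.n) (u : Fin (d i) → K) : res d K i (ext d K i u) = u := by
  funext v
  change (if h : i = i then u (Fin.cast (congrArg d h) v) else 0) = u v
  rw [dif_pos rfl]
  rfl

theorem ext_res (i : Fin Q.n) (m : Carrier Q d K) : ext d K i (res d K i m) = proj Q d K i m := by
  funext ⟨j, v⟩
  rw [proj_apply]
  by_cases h : j = i
  · subst h
    change (if h : j = j then m ⟨j, (Fin.cast (congrArg d h) v)⟩ else 0) = _
    simp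
  · change (if h : j = i then m ⟨i, (Fin.cast (congrArg d h) v)⟩ else 0) = _
    simp [h]

theorem proj_ext (i : Fin Q.n) (u : Fin (d i) → K) : proj Q d K i (ext d K i u) = ext d K i u := by
  rw [← ext_res, res_ext]

theorem res_proj (i : Fin Q.n) (m : Carrier Q d K) : res d K i (proj Q d K i m) = res d K i m := by
  rw [← ext_res, res_ext]

theorem dim_sum (h : IsBip I P) (i : Fin Q.n) : d i = ∑ r, D r i := by
  let L : (Fin (d i) → K) ≃ₗ[K] (∀ r, Fin (D r i) → K) :=
    LinearEquiv.ofLinearMap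
      (LinearMap.pi fun r => res (D r) K i ∘ₗ P r ∘ₗ ext d K i)
      (∑ r, res d K i ∘ₗ I r ∘ₗ ext (D r) K i ∘ₗ LinearMap.proj r)
      (by
        refine LinearMap.ext fun w => ?_
        funext r
        simp only [LinearMap.comp_apply, LinearMap.pi_apply, LinearMap.sum_apply, map_sum,
          LinearMap.proj_apply, LinearMap.id_apply]
        rw [Finset.sum_eq_single r]
        · rw [ext_res, ← (h.gI r).apply, proj_ext, h.pi_same, res_ext]
        · intro t _ ht
          rw [ext_res, ← (h.gI t).apply, proj_ext, h.pi_ne r t ht.symm, map_zero]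
        · simp)
      (by
        refine LinearMap.ext fun u => ?_
        simp only [LinearMap.comp_apply, LinearMap.pi_apply, LinearMap.sum_apply,
          LinearMap.proj_apply, LinearMap.id_apply]
        have : ∀ r, I r (ext (D r) K i (res (D r) K i (P r (ext d K i u)))) =
            I r (P r (ext d K i u)) := by
          intro r
          rw [ext_res, ← (h.gP r).apply, proj_ext]
        simp_rw [this]
        rw [← map_sum, h.total, res_ext])
  have := L.finrank_eq
  rw [Module.finrank_fin_fun, Module.finrank_pi_fintype] at this
  simpa using this

theorem exists_P (hg : ∀ r, Graded (I r))
    (hb : Function.Bijective fun m : (∀ r, Carrier Q (D r) K) => ∑ r, I r (m r)) :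
    ∃ P : ∀ r, Carrier Q d K →ₗ[K] Carrier Q (D r) K, IsBip I P := by
  classical
  let Θ : (∀ r, Carrier Q (D r) K) →ₗ[K] Carrier Q d K := ∑ r, I r ∘ₗ LinearMap.proj r
  have hΘ : ∀ m, Θ m = ∑ r, I r (m r) := fun m => by simp [Θ, LinearMap.sum_apply]
  have hb' : Function.Bijective Θ := by
    convert hb using 1
    funext m; exact hΘ m
  let E := LinearEquiv.ofBijective Θ hb'
  have hE : ∀ m, Θ (E.symm m) = m := fun m => E.apply_symm_apply m
  have hs : ∀ r m, Θ (Pi.single r m) = I r m := by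
    intro r m
    rw [hΘ, Finset.sum_eq_single r]
    · simp
    · intro t _ ht; simp [Pi.single_eq_of_ne ht]
    · simp
  have hs' : ∀ r m, E.symm (I r m) = Pi.single r m := fun r m => by
    rw [← hs]; exact E.symm_apply_apply _
  refine ⟨fun r => LinearMap.proj r ∘ₗ (E.symm : Carrier Q d K →ₗ[K] (∀ r, Carrier Q (D r) K)), hg, ?_, ?_, ?_, ?_⟩
  · intro r i
    refine LinearMap.ext fun m => ?_
    have : E.symm (proj Q d K i m) = fun r => proj Q (D r) K i (E.symm m r) := by
      apply hb'.1
      rw [hE, hΘ]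
      simp_rw [fun r => (hg r).apply]
      rw [← map_sum, ← hΘ, hE]
    simp [this]
  · intro r m
    simp [hs']
  · intro r t hrt m
    simp [hs', Pi.single_eq_of_ne hrt]
  · intro m
    have := hE m
    rw [hΘ] at this
    simpa using this

/-- change of the biproduct data by an automorphism -/
theorem IsBip.conj (h : IsBip I P) {g g' : Module.End K (Carrier Q d K)} (hg : Graded g)
    (h1 : ∀ m, g (g' m) = m) (h2 : ∀ m, g' (g m) = m) :
    IsBip (fun r => g ∘ₗ I r) (fun r => P r ∘ₗ g') := by
  have hg' : Graded g' := by
    intro i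
    refine LinearMap.ext fun m => ?_
    simp only [LinearMap.comp_apply]
    conv_lhs => rw [← h1 m, ← hg.apply, h2]
  refine ⟨?_, ?_, ?_, ?_, ?_⟩
  · intro r i
    refine LinearMap.ext fun m => ?_
    simp [(h.gI r).apply, hg.apply]
  · intro r i
    refine LinearMap.ext fun m => ?_
    simp [(h.gP r).apply, hg'.apply]
  · intro r m; simp [h2, h.pi_same]
  · intro r t hrt m; simp [h2, h.pi_ne r t hrt]
  · intro m
    simp only [LinearMap.comp_apply]
    rw [← map_sum, h.total, h1]

theorem IsBip.sigma {J' : J → Type} [∀ r, Fintype (J' r)] {D' : ∀ r, J' r → Fin Q.n → ℕ}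
    {I' : ∀ r (j : J' r), Carrier Q (D' r j) K →ₗ[K] Carrier Q (D r) K}
    {P' : ∀ r (j : J' r), Carrier Q (D r) K →ₗ[K] Carrier Q (D' r j) K}
    (h : IsBip I P) (h' : ∀ r, IsBip (I' r) (P' r)) :
    IsBip (D := fun s : Σ r, J' r => D' s.1 s.2) (fun s => I s.1 ∘ₗ I' s.1 s.2)
      (fun s => P' s.1 s.2 ∘ₗ P s.1) := by
  refine ⟨?_, ?_, ?_, ?_, ?_⟩
  · intro r i
    refine LinearMap.ext fun m => ?_
    simp [(h.gI r.1).apply, ((h' r.1).gI r.2).apply]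
  · intro r i
    refine LinearMap.ext fun m => ?_
    simp [(h.gP r.1).apply, ((h' r.1).gP r.2).apply]
  · intro r m; simp [h.pi_same, (h' r.1).pi_same]
  · rintro ⟨r, j⟩ ⟨t, k⟩ hrt m
    by_cases hr : r = t
    · subst hr
      have : j ≠ k := fun e => hrt (by rw [e])
      simp [h.pi_same, (h' r).pi_ne j k this]
    · simp [h.pi_ne r t hr]
  · intro m
    rw [Fintype.sum_sigma]
    change ∑ r, ∑ j, I r (I' r j (P' r j (P r m))) = m
    simp_rw [← map_sum, (h' _).total, h.total]

theorem IsBip.reindex {J' : Type} [Fintype J'] (e : J' ≃ J) (h : IsBip I P) :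
    IsBip (D := fun j => D (e j)) (fun j => I (e j)) (fun j => P (e j)) := by
  refine ⟨fun r => h.gI _, fun r => h.gP _, fun r => h.pi_same _, fun r t hrt =>
    h.pi_ne _ _ (fun h => hrt (e.injective h)), fun m => ?_⟩
  rw [e.sum_comp (fun j => I j (P j m)), h.total]

theorem dims_of_iso {e : Fin Q.n → ℕ} {φ : Carrier Q d K →ₗ[K] Carrier Q e K}
    {ψ : Carrier Q e K →ₗ[K] Carrier Q d K} (hφ : Graded φ) (hψ : Graded ψ)
    (h1 : φ ∘ₗ ψ = LinearMap.id) (h2 : ψ ∘ₗ φ = LinearMap.id) : d = e := by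
  have : IsBip (J := Unit) (D := fun _ => d) (fun _ => φ) (fun _ => ψ) :=
    ⟨fun _ => hφ, fun _ => hψ, fun _ m => LinearMap.congr_fun h2 m, fun r t h => absurd rfl h,
      fun m => by simpa using LinearMap.congr_fun h1 m⟩
  funext i
  simpa using (dim_sum this i).symm

/-- independent submodules -/
theorem bij_of_indep {N : J → Submodule K (Carrier Q d K)}
    (hI : ∀ r, Function.Injective (I r)) (hr : ∀ r, LinearMap.range (I r) = N r)
    (hd : ∀ r, Disjoint (N r) (⨆ t, ⨆ (_ : t ≠ r), N t)) (ht : (⨆ r, N r) = ⊤) :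
    Function.Bijective fun m : (∀ r, Carrier Q (D r) K) => ∑ r, I r (m r) := by
  classical
  let Θ : (∀ r, Carrier Q (D r) K) →ₗ[K] Carrier Q d K := ∑ r, I r ∘ₗ LinearMap.proj r
  have hΘ : ∀ m, Θ m = ∑ r, I r (m r) := fun m => by simp [Θ, LinearMap.sum_apply]
  suffices h : Function.Bijective Θ by
    convert h using 1
    funext m; exact (hΘ m).symm
  constructor
  · rw [← LinearMap.ker_eq_bot, eq_bot_iff]
    intro m hm
    rw [LinearMap.mem_ker, hΘ] at hm
    rw [Submodule.mem_bot]
    funext r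
    apply hI r
    rw [Pi.zero_apply, map_zero]
    refine Submodule.disjoint_def.1 (hd r) _ (hr r ▸ ⟨_, rfl⟩) ?_
    have : I r (m r) = - ∑ t ∈ Finset.univ.erase r, I t (m t) := by
      rw [eq_neg_iff_add_eq_zero, Finset.add_sum_erase _ (fun t => I t (m t)) (Finset.mem_univ r), hm]
    rw [this]
    refine Submodule.neg_mem _ (Submodule.sum_mem _ fun t ht => ?_)
    refine Submodule.mem_iSup_of_mem t (Submodule.mem_iSup_of_mem (Finset.ne_of_mem_erase ht) ?_)
    exact hr t ▸ ⟨_, rfl⟩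
  · rw [← LinearMap.range_eq_top, eq_top_iff, ← ht]
    refine iSup_le fun r => ?_
    rw [← hr r]
    rintro _ ⟨m, rfl⟩
    refine ⟨Pi.single r m, ?_⟩
    rw [hΘ, Finset.sum_eq_single r]
    · simp
    · intro t _ ht; simp [Pi.single_eq_of_ne ht]
    · simp

theorem exists_y (h : IsBip I P) {x : RepSpace Q d K}
    (hs : ∀ r, Stable Q d K x (LinearMap.range (I r))) :
    ∃ y : ∀ r, RepSpace Q (D r) K, x = bsum I P y := by
  refine ⟨fun r => mk fun a => P r ∘ₗ arrowMap Q d K x a ∘ₗ I r, eq_bsum h fun r a m => ?_⟩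
  rw [arrow_mk]
  · obtain ⟨n, hn⟩ := (hs r).1 a ⟨I r m, ⟨m, rfl⟩, rfl⟩
    simp only [LinearMap.comp_apply]
    rw [← hn, h.pi_same]
  · intro a m
    simp only [LinearMap.comp_apply]
    rw [← (h.gP r).apply, proj_arrow]
  · intro a m
    simp only [LinearMap.comp_apply]
    rw [(h.gI r).apply, arrow_proj]

theorem subrep_iff {s : ℕ} {D : Fin s → Fin Q.n → ℕ} {Cs : ∀ r : Fin s, Set (RepSpace Q (D r) K)}
    {x : RepSpace Q d K} :
    x ∈ DirectSumSet Q d K s D Cs ↔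
      ∃ (I : ∀ r, Carrier Q (D r) K →ₗ[K] Carrier Q d K)
        (P : ∀ r, Carrier Q d K →ₗ[K] Carrier Q (D r) K), IsBip I P ∧
        ∃ y : ∀ r, RepSpace Q (D r) K, (∀ r, y r ∈ Cs r) ∧ x = bsum I P y := by
  constructor
  · rintro ⟨N, hst, hd, ht, hiso⟩
    choose y hy φ hinj hsurj ha hp using hiso
    have hbij : ∀ r, Function.Bijective ((φ r) ∘ₗ (N r).subtype) := by
      intro r
      constructor
      · rw [← LinearMap.ker_eq_bot, eq_bot_iff]
        rintro ⟨m, hm⟩ hm'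
        have : m ∈ N r ⊓ LinearMap.ker (φ r) := ⟨hm, hm'⟩
        rw [hinj r] at this
        rw [Submodule.mem_bot] at this ⊢
        exact Subtype.ext this
      · rw [← LinearMap.range_eq_top, LinearMap.range_comp, Submodule.range_subtype]
        exact hsurj r
    let E := fun r => LinearEquiv.ofBijective _ (hbij r)
    let I : ∀ r, Carrier Q (D r) K →ₗ[K] Carrier Q d K := fun r =>
      (N r).subtype ∘ₗ ((E r).symm : Carrier Q (D r) K →ₗ[K] N r)
    have hIN : ∀ r m, I r m ∈ N r := fun r m => ((E r).symm m).2
    have hφI : ∀ r m, φ r (I r m) = m := fun r m => (E r).apply_symm_apply m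
    have hIφ : ∀ r, ∀ m ∈ N r, I r (φ r m) = m := fun r m hm =>
      congrArg Subtype.val ((E r).symm_apply_apply ⟨m, hm⟩)
    have hIinj : ∀ r, Function.Injective (I r) := fun r =>
      Function.LeftInverse.injective (hφI r)
    have hr : ∀ r, LinearMap.range (I r) = N r := by
      intro r
      apply le_antisymm
      · rintro _ ⟨m, rfl⟩; exact hIN r m
      · intro m hm; exact ⟨φ r m, hIφ r m hm⟩
    have hgr : ∀ r, Graded (I r) := by
      intro r i
      refine LinearMap.ext fun m => ?_
      simp only [LinearMap.comp_apply]
      rw [← hIφ r (proj Q d K i (I r m)) ((hst r).2 i ⟨_, hIN r m, rfl⟩), hp r i _ (hIN r m), hφI]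
    obtain ⟨P, hP⟩ := exists_P hgr (bij_of_indep hIinj hr hd ht)
    refine ⟨I, P, hP, y, hy, eq_bsum hP fun r a m => ?_⟩
    rw [← hIφ r (arrowMap Q d K x a (I r m)) ((hst r).1 a ⟨_, hIN r m, rfl⟩), ha r a _ (hIN r m), hφI]
  · rintro ⟨I, P, h, y, hy, rfl⟩
    refine ⟨fun r => LinearMap.range (I r), fun r => stable_range (homI h y r), ?_, ?_, ?_⟩
    · intro r
      rw [Submodule.disjoint_def]
      rintro _ ⟨m, rfl⟩ hm
      have : (⨆ t, ⨆ (_ : t ≠ r), LinearMap.range (I t)) ≤ LinearMap.ker (P r) := by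
        refine iSup_le fun t => iSup_le fun ht => ?_
        rintro _ ⟨n, rfl⟩
        exact h.pi_ne r t ht.symm n
      have h2 := this hm
      rw [LinearMap.mem_ker, h.pi_same] at h2
      rw [h2, map_zero]
    · rw [eq_top_iff]
      intro m _
      rw [← h.total m]
      exact Submodule.sum_mem _ fun r _ => Submodule.mem_iSup_of_mem r ⟨_, rfl⟩
    · intro r
      refine ⟨y r, hy r, P r, ?_, ?_, ?_, ?_⟩
      · rw [eq_bot_iff]
        rintro _ ⟨⟨m, rfl⟩, hm⟩
        rw [SetLike.mem_coe, LinearMap.mem_ker, h.pi_same] at hm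
        rw [Submodule.mem_bot, hm, map_zero]
      · rw [eq_top_iff]
        intro m _
        exact ⟨I r m, ⟨m, rfl⟩, h.pi_same r m⟩
      · intro a m _
        exact LinearMap.congr_fun ((homP h y r).1 a) m
      · intro i m _
        exact (h.gP r).apply i m

/-- every stable submodule is the image of a graded injection -/
theorem exists_param (N : Submodule K (Carrier Q d K)) (hN : ∀ i, N.map (proj Q d K i) ≤ N) :
    ∃ (e : Fin Q.n → ℕ) (φ : Carrier Q e K →ₗ[K] Carrier Q d K), Graded φ ∧
      Function.Injective φ ∧ LinearMap.range φ = N := by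
  let e : Fin Q.n → ℕ := fun i => Module.finrank K (N.map (proj Q d K i))
  let b : ∀ i, Module.Basis (Fin (e i)) K (N.map (proj Q d K i)) := fun i => Module.finBasis K _
  let φ : Carrier Q e K →ₗ[K] Carrier Q d K :=
    ∑ i, (N.map (proj Q d K i)).subtype ∘ₗ ((b i).equivFun.symm : (Fin (e i) → K) →ₗ[K] _) ∘ₗ
      res e K i
  let c : ∀ i, Carrier Q e K → Carrier Q d K := fun i m =>
    (((b i).equivFun.symm (res e K i m) : N.map (proj Q d K i)) : Carrier Q d K)
  have hφ : ∀ m, φ m = ∑ i, c i m := fun m => by simp [φ, c, LinearMap.sum_apply]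
  have hc : ∀ i j m, proj Q d K i (c j m) = if i = j then c i m else 0 := by
    intro i j m
    obtain ⟨n, hn, hn'⟩ := ((b j).equivFun.symm (res e K j m)).2
    have : c j m = proj Q d K j n := hn'.symm
    rw [this, proj_proj]
    split_ifs with h
    · subst h; exact this.symm
    · rfl
  have hpφ : ∀ i m, proj Q d K i (φ m) = c i m := by
    intro i m
    rw [hφ, map_sum]
    simp [hc]
  have hcp : ∀ i j m, c j (proj Q e K i m) = if i = j then c i m else 0 := by
    intro i j m
    simp only [c]
    split_ifs with h
    · subst h; rw [res_proj]
    · have : res e K j (proj Q e K i m) = 0 := by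
        funext v
        change proj Q e K i m ⟨j, v⟩ = 0
        rw [proj_apply, if_neg (fun h' => h h'.symm)]
      rw [this, map_zero]; rfl
  refine ⟨e, φ, ?_, ?_, ?_⟩
  · intro i
    refine LinearMap.ext fun m => ?_
    rw [LinearMap.comp_apply, LinearMap.comp_apply, hpφ, hφ]
    simp [hcp]
  · rw [← LinearMap.ker_eq_bot, eq_bot_iff]
    intro m hm
    rw [LinearMap.mem_ker] at hm
    rw [Submodule.mem_bot]
    funext ⟨i, v⟩
    have h1 := hpφ i m
    rw [hm, map_zero] at h1
    have h2 : (b i).equivFun.symm (res e K i m) = 0 := Subtype.ext h1.symm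
    have h3 : res e K i m = 0 := (LinearEquiv.map_eq_zero_iff _).1 h2
    exact congrFun h3 v
  · apply le_antisymm
    · rintro _ ⟨m, rfl⟩
      rw [hφ]
      exact Submodule.sum_mem _ fun i _ => hN i ((b i).equivFun.symm (res e K i m)).2
    · intro n hn
      refine ⟨∑ i, ext e K i ((b i).equivFun ⟨proj Q d K i n, ⟨n, hn, rfl⟩⟩), ?_⟩
      rw [map_sum]
      conv_rhs => rw [← sum_proj n]
      refine Finset.sum_congr rfl fun i _ => ?_
      rw [hφ, ← proj_ext]
      simp only [hcp]
      rw [Finset.sum_ite_eq, if_pos (Finset.mem_univ i)]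
      simp only [c]
      rw [res_ext, LinearEquiv.symm_apply_apply]

/-- decomposable representations -/
theorem exists_split {x : RepSpace Q d K} (hd : d ≠ 0) (hx : ¬ IndecompRep Q d K x) :
    ∃ (D : Bool → Fin Q.n → ℕ) (I : ∀ r, Carrier Q (D r) K →ₗ[K] Carrier Q d K)
        (P : ∀ r, Carrier Q d K →ₗ[K] Carrier Q (D r) K), IsBip I P ∧ (∀ b, D b ≠ 0) ∧
        ∃ y : ∀ r, RepSpace Q (D r) K, x = bsum I P y := by
  have hnt : (⊤ : Submodule K (Carrier Q d K)) ≠ ⊥ := by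
    obtain ⟨i, hi⟩ := Function.ne_iff.1 hd
    intro h
    have hi' : 0 < d i := Nat.pos_of_ne_zero hi
    have : (Pi.single (⟨i, ⟨0, hi'⟩⟩ : Σ i, Fin (d i)) (1 : K) : Carrier Q d K) ∈
      (⊤ : Submodule K (Carrier Q d K)) := trivial
    rw [h, Submodule.mem_bot] at this
    simp at this
  unfold IndecompRep IndecompSub at hx
  push Not at hx
  obtain ⟨N₁, N₂, s1, s2, -, -, hsup, hinf, n1, n2⟩ := hx hnt
  let N : Bool → Submodule K (Carrier Q d K) := fun b => cond b N₁ N₂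
  have hN : ∀ b, Stable Q d K x (N b) := by rintro (_ | _) <;> assumption
  choose D I hg hI hr using fun b => exists_param (N b) (hN b).2
  obtain ⟨P, hP⟩ := exists_P hg (bij_of_indep hI hr (by
      rw [Bool.forall_bool]
      simp only [iSup_bool_eq]
      simp [N, disjoint_iff, hinf, inf_comm N₂ N₁]) (by
      rw [iSup_bool_eq]; exact hsup))
  refine ⟨D, I, P, hP, ?_, exists_y hP fun r => by rw [hr]; exact hN r⟩
  intro b hb
  have : N b = ⊥ := by
    rw [← hr b, LinearMap.range_eq_bot]
    refine LinearMap.ext fun m => ?_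
    have : m = 0 := by
      funext ⟨i, v⟩
      rw [hb] at v
      exact v.elim0
    simp [this]
  cases b
  · exact n2 this
  · exact n1 this

end bip
end CBS


namespace CBS
open QuiverData

attribute [local instance] zariskiTopology

section reg
variable {X K : Type} [Field K] (F : Subalgebra K (X → K))

/-- regular families of linear maps -/
def EntReg {V W : Type} [DecidableEq V] (φ : X → ((V → K) →ₗ[K] (W → K))) : Prop :=
  ∀ v w, (fun z => φ z (Pi.single v 1) w) ∈ F

theorem lin_mem {V W : Type} [DecidableEq V] [Fintype V] {φ : X → ((V → K) →ₗ[K] (W → K))}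
    (hφ : EntReg F φ) {m : X → V → K} (hm : ∀ v, (fun z => m z v) ∈ F) (w : W) :
    (fun z => φ z (m z) w) ∈ F := by
  have : (fun z => φ z (m z) w) = fun z => ∑ v, m z v * φ z (Pi.single v 1) w := by
    funext z
    conv_lhs => rw [← Finset.univ_sum_single (m z)]
    rw [map_sum, Finset.sum_apply]
    refine Finset.sum_congr rfl fun v _ => ?_
    have : (Pi.single v (m z v) : V → K) = m z v • Pi.single v 1 := by
      rw [← Pi.single_smul, smul_eq_mul, mul_one]
    rw [this, map_smul, Pi.smul_apply, smul_eq_mul]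
  rw [this]
  exact sum_mem' F _ fun v _ => mul_mem' F (hm v) (hφ v w)

theorem const_entReg {V W : Type} [DecidableEq V] (φ : (V → K) →ₗ[K] (W → K)) :
    EntReg F (fun _ : X => φ) := fun _ _ => const_mem F _

theorem EntReg.comp {V W U : Type} [DecidableEq V] [DecidableEq W] [Fintype W]
    {φ : X → ((W → K) →ₗ[K] (U → K))} {ψ : X → ((V → K) →ₗ[K] (W → K))}
    (hφ : EntReg F φ) (hψ : EntReg F ψ) : EntReg F (fun z => φ z ∘ₗ ψ z) := fun v w =>
  lin_mem F hφ (m := fun z => ψ z (Pi.single v 1)) (fun u => hψ v u) w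

variable {Q : QuiverData} {d : Fin Q.n → ℕ}

theorem proj_mem {m : X → Carrier Q d K} (hm : ∀ v, (fun z => m z v) ∈ F) (i) (jv) :
    (fun z => proj Q d K i (m z) jv) ∈ F := by
  simp only [proj_apply]
  by_cases h : jv.1 = i
  · simp only [if_pos h]; exact hm _
  · simp only [if_neg h]; exact const_mem F 0

theorem arrow_mem {x : X → RepSpace Q d K} (hx : ∀ c, (fun z => x z c) ∈ F)
    {m : X → Carrier Q d K} (hm : ∀ v, (fun z => m z v) ∈ F) (a) (jv) :
    (fun z => arrowMap Q d K (x z) a (m z) jv) ∈ F := by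
  obtain ⟨j, v⟩ := jv
  by_cases h : j = Q.tgt a
  · subst h
    simp only [arrow_apply_tgt]
    exact sum_mem' F _ fun w _ => mul_mem' F (hx _) (hm _)
  · have : ∀ z, arrowMap Q d K (x z) a (m z) ⟨j, v⟩ = 0 := fun z => arrow_apply_ne _ _ _ h
    simp only [this]
    exact const_mem F 0

theorem evalRel_mem {x : X → RepSpace Q d K} (hx : ∀ c, (fun z => x z c) ∈ F)
    (w : FreeAlgebra K (Fin Q.n ⊕ Fin Q.numArrows)) :
    ∀ {m : X → Carrier Q d K} (_ : ∀ v, (fun z => m z v) ∈ F) (jv),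
    (fun z => evalRel Q d K (x z) w (m z) jv) ∈ F := by
  induction w using FreeAlgebra.induction with
  | grade0 r =>
    intro m hm jv
    simp only [AlgHom.commutes, Module.algebraMap_end_apply, Pi.smul_apply, smul_eq_mul]
    exact mul_mem' F (const_mem F r) (hm jv)
  | grade1 a =>
    intro m hm jv
    simp only [evalRel, FreeAlgebra.lift_ι_apply]
    cases a with
    | inl i => exact proj_mem F hm i jv
    | inr a => exact arrow_mem F hx hm a jv
  | mul a b ha hb =>
    intro m hm jv
    simp only [map_mul, Module.End.mul_apply]
    exact ha (m := fun z => evalRel Q d K (x z) b (m z)) (fun v => hb hm v) jv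
  | add a b ha hb =>
    intro m hm jv
    simp only [map_add, LinearMap.add_apply, Pi.add_apply]
    exact add_mem' F (ha hm jv) (hb hm jv)

variable {J : Type} [Fintype J] {D : J → Fin Q.n → ℕ}

theorem bsum_reg {I : X → ∀ r, Carrier Q (D r) K →ₗ[K] Carrier Q d K}
    {P : X → ∀ r, Carrier Q d K →ₗ[K] Carrier Q (D r) K} {y : X → ∀ r, RepSpace Q (D r) K}
    (hI : ∀ r, EntReg F fun z => I z r) (hP : ∀ r, EntReg F fun z => P z r)
    (hy : ∀ r c, (fun z => y z r c) ∈ F) (c) : (fun z => bsum (I z) (P z) (y z) c) ∈ F := by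
  simp only [bsum, mk, LinearMap.sum_apply, Finset.sum_apply, LinearMap.comp_apply]
  refine sum_mem' F _ fun r _ => ?_
  refine lin_mem F (hI r) (m := fun z => arrowMap Q (D r) K (y z r) c.1 (P z r _)) (fun v => ?_) _
  refine arrow_mem F (hy r) (m := fun z => P z r _) (fun v => hP r _ _) _ _

end reg

section topo
variable {K : Type} [Field K] {Q : QuiverData} {d : Fin Q.n → ℕ}
  {Rels : Set (FreeAlgebra K (Fin Q.n ⊕ Fin Q.numArrows))}

theorem repVar_closed : IsClosed (RepVar Q d K Rels) := by
  have : RepVar Q d K Rels = ⋂ r ∈ Rels, ⋂ v, ⋂ w,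
      {x | evalRel Q d K x r (Pi.single v 1) w = 0} := by
    ext x
    simp only [RepVar, Set.mem_setOf_eq, Set.mem_iInter]
    refine forall₂_congr fun r _ => ⟨fun h v w => by rw [h]; rfl, fun h => ?_⟩
    refine LinearMap.pi_ext' fun v => LinearMap.ext_ring ?_
    funext w
    exact h v w
  rw [this]
  refine isClosed_biInter fun r _ => isClosed_iInter fun v => isClosed_iInter fun w => ?_
  exact isClosed_eq_zero (evalRel_mem (polyAlg _ K) (x := fun z => z) (fun c => coord_mem c) r
    (m := fun _ => Pi.single v 1) (fun _ => const_mem _ _) w)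

theorem genV_noeth : TopologicalSpace.NoetherianSpace (GenV Q d K Rels) := by
  have : TopologicalSpace.NoetherianSpace (RepSpace Q d K) := noetherian
  exact Topology.IsInducing.subtypeVal.noetherianSpace

theorem finite_comps : (irreducibleComponents (GenV Q d K Rels)).Finite := by
  have : TopologicalSpace.NoetherianSpace (GenV Q d K Rels) := genV_noeth
  exact TopologicalSpace.NoetherianSpace.finite_irreducibleComponents

variable {J : Type} [Fintype J] {D : J → Fin Q.n → ℕ}

/-- direct sum as a point of the variety -/
noncomputable def bsumV {I : ∀ r, Carrier Q (D r) K →ₗ[K] Carrier Q d K}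
    {P : ∀ r, Carrier Q d K →ₗ[K] Carrier Q (D r) K} (h : IsBip I P)
    (y : ∀ j, GenV Q (D j) K Rels) : GenV Q d K Rels :=
  ⟨bsum I P fun j => (y j).1, (bsum_mem h Rels _).2 fun j => (y j).2⟩

/-- direct sums of families of sets -/
def DSJ (d : Fin Q.n → ℕ) (S : ∀ j, Set (GenV Q (D j) K Rels)) : Set (GenV Q d K Rels) :=
  {x | ∃ (I : ∀ r, Carrier Q (D r) K →ₗ[K] Carrier Q d K)
    (P : ∀ r, Carrier Q d K →ₗ[K] Carrier Q (D r) K) (h : IsBip I P)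
    (y : ∀ j, GenV Q (D j) K Rels), (∀ j, y j ∈ S j) ∧ x = bsumV h y}

theorem DSJ_mono {S T : ∀ j, Set (GenV Q (D j) K Rels)} (h : ∀ j, S j ⊆ T j) :
    DSJ d S ⊆ DSJ d T := by
  rintro x ⟨I, P, hb, y, hy, rfl⟩
  exact ⟨I, P, hb, y, fun j => h j (hy j), rfl⟩

theorem DSJ_eq {s : ℕ} {D : Fin s → Fin Q.n → ℕ} (S : ∀ j, Set (GenV Q (D j) K Rels)) :
    {x : GenV Q d K Rels |
      x.1 ∈ DirectSumSet Q d K s D (fun r => Subtype.val '' S r)} = DSJ d S := by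
  ext x
  rw [Set.mem_setOf_eq, subrep_iff]
  constructor
  · rintro ⟨I, P, h, y, hy, hx⟩
    choose y' hy' e using hy
    refine ⟨I, P, h, y', hy', Subtype.ext ?_⟩
    rw [hx]
    change _ = bsum I P fun j => (y' j).1
    congr 1
    funext r
    exact (e r).symm
  · rintro ⟨I, P, h, y, hy, rfl⟩
    exact ⟨I, P, h, fun j => (y j).1, fun j => ⟨y j, hy j, rfl⟩, rfl⟩

theorem bsumV_cont [DecidableEq J] {I : ∀ r, Carrier Q (D r) K →ₗ[K] Carrier Q d K}
    {P : ∀ r, Carrier Q d K →ₗ[K] Carrier Q (D r) K} (h : IsBip I P)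
    (y : ∀ j, GenV Q (D j) K Rels) (j : J) :
    Continuous fun t => bsumV h (Function.update y j t) := by
  have hc : Continuous fun t : RepSpace Q (D j) K =>
      bsum I P (Function.update (fun k => (y k).1) j t) := by
    refine continuous_of_poly fun c => ?_
    refine bsum_reg (polyAlg _ K) (I := fun _ => I) (P := fun _ => P)
      (y := fun t => Function.update (fun k => (y k).1) j t)
      (fun r => const_entReg _ _) (fun r => const_entReg _ _) ?_ c
    intro r c
    by_cases hr : r = j
    · subst hr
      simp only [Function.update_self]
      exact coord_mem c
    · simp only [Function.update_of_ne hr]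
      exact const_mem _ _
  refine Continuous.subtype_mk ?_ _
  have : (fun t : GenV Q (D j) K Rels => bsum I P fun k => (Function.update y j t k).1) =
      (fun t : RepSpace Q (D j) K => bsum I P (Function.update (fun k => (y k).1) j t)) ∘
        Subtype.val := by
    funext t
    simp only [Function.comp]
    congr 1
    funext k
    exact Function.apply_update (fun k (z : GenV Q (D k) K Rels) => z.1) y j t k
  rw [this]
  exact hc.comp continuous_subtype_val

theorem DSJ_closure (S : ∀ j, Set (GenV Q (D j) K Rels)) :
    DSJ d (fun j => closure (S j)) ⊆ closure (DSJ d S) := by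
  classical
  rintro x ⟨I, P, h, y, hy, rfl⟩
  refine closure_mono ?_ (sep_closure (f := bsumV h) (bsumV_cont h) hy)
  rintro _ ⟨z, hz, rfl⟩
  exact ⟨I, P, h, z, hz, rfl⟩

end topo

section rat
variable {K : Type} [Field K] (δ : Polynomial K)

/-- rational functions with denominators powers of `δ` -/
def ratAlg : Subalgebra K ({t : K // δ.eval t ≠ 0} → K) where
  carrier := {f | ∃ (p : Polynomial K) (n : ℕ), ∀ t, f t * δ.eval t.1 ^ n = p.eval t.1}
  mul_mem' := by
    rintro f g ⟨p, n, hp⟩ ⟨q, m, hq⟩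
    refine ⟨p * q, n + m, fun t => ?_⟩
    rw [Polynomial.eval_mul, ← hp, ← hq, Pi.mul_apply]
    ring
  add_mem' := by
    rintro f g ⟨p, n, hp⟩ ⟨q, m, hq⟩
    refine ⟨p * δ ^ m + q * δ ^ n, n + m, fun t => ?_⟩
    rw [Polynomial.eval_add, Polynomial.eval_mul, Polynomial.eval_mul, Polynomial.eval_pow,
      Polynomial.eval_pow, ← hp, ← hq, Pi.add_apply]
    ring
  algebraMap_mem' := by
    intro r
    exact ⟨Polynomial.C r, 0, fun t => by simp⟩

theorem rat_common [Infinite K] {f g : {t : K // δ.eval t ≠ 0} → K} (hf : f ∈ ratAlg δ)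
    (hg : g ∈ ratAlg δ) {s t} (hs : f s ≠ 0) (ht : g t ≠ 0) : ∃ u, f u ≠ 0 ∧ g u ≠ 0 := by
  obtain ⟨p, n, hp⟩ := hf
  obtain ⟨q, m, hq⟩ := hg
  have hp0 : p ≠ 0 := by
    rintro rfl
    have := hp s
    simp [hs, s.2] at this
  have hq0 : q ≠ 0 := by
    rintro rfl
    have := hq t
    simp [ht, t.2] at this
  have hδ : δ ≠ 0 := by
    rintro rfl
    exact s.2 (by simp)
  obtain ⟨u, hu⟩ := Polynomial.exists_eval_ne_zero_of_natDegree_lt_card (p * q * δ)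
    (mul_ne_zero (mul_ne_zero hp0 hq0) hδ) (by
      exact lt_of_lt_of_le (Cardinal.nat_lt_aleph0 _) (Cardinal.aleph0_le_mk K))
  simp only [Polynomial.eval_mul, ne_eq, mul_eq_zero, not_or] at hu
  refine ⟨⟨u, hu.2⟩, ?_, ?_⟩
  · intro h
    apply hu.1.1
    rw [← hp ⟨u, hu.2⟩, h, zero_mul]
  · intro h
    apply hu.1.2
    rw [← hq ⟨u, hu.2⟩, h, zero_mul]

end rat
end CBS


namespace CBS
open QuiverData

attribute [local instance] zariskiTopology

section irr
variable {K : Type} [Field K] {Q : QuiverData} {d : Fin Q.n → ℕ}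
  {Rels : Set (FreeAlgebra K (Fin Q.n ⊕ Fin Q.numArrows))}
variable {J : Type} [Fintype J] {D : J → Fin Q.n → ℕ}

/-- joining two biproduct structures by a rational family -/
theorem join_bip [Infinite K] {I₁ I₂ : ∀ r, Carrier Q (D r) K →ₗ[K] Carrier Q d K}
    {P₁ P₂ : ∀ r, Carrier Q d K →ₗ[K] Carrier Q (D r) K} (h₁ : IsBip I₁ P₁) (h₂ : IsBip I₂ P₂)
    (y₁ y₂ : ∀ r, RepSpace Q (D r) K) (p₁ p₂ : MvPolynomial (Coords Q d) K)
    (e₁ : MvPolynomial.eval (bsum I₁ P₁ y₁) p₁ ≠ 0)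
    (e₂ : MvPolynomial.eval (bsum I₂ P₂ y₂) p₂ ≠ 0) :
    ∃ (I : ∀ r, Carrier Q (D r) K →ₗ[K] Carrier Q d K)
      (P : ∀ r, Carrier Q d K →ₗ[K] Carrier Q (D r) K), IsBip I P ∧
      MvPolynomial.eval (bsum I P y₁) p₁ ≠ 0 ∧ MvPolynomial.eval (bsum I P y₂) p₂ ≠ 0 := by
  classical
  let g : Module.End K (Carrier Q d K) := ∑ r, I₂ r ∘ₗ P₁ r
  let g' : Module.End K (Carrier Q d K) := ∑ r, I₁ r ∘ₗ P₂ r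
  have hgv : ∀ m, g m = ∑ r, I₂ r (P₁ r m) := fun m => by simp [g, LinearMap.sum_apply]
  have hgv' : ∀ m, g' m = ∑ r, I₁ r (P₂ r m) := fun m => by simp [g', LinearMap.sum_apply]
  have hgI : ∀ r m, g (I₁ r m) = I₂ r m := by
    intro r m
    rw [hgv, Finset.sum_eq_single r]
    · rw [h₁.pi_same]
    · intro t _ ht; rw [h₁.pi_ne t r ht, map_zero]
    · simp
  have hgI' : ∀ r m, g' (I₂ r m) = I₁ r m := by
    intro r m
    rw [hgv', Finset.sum_eq_single r]
    · rw [h₂.pi_same]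
    · intro t _ ht; rw [h₂.pi_ne t r ht, map_zero]
    · simp
  have hPg : ∀ r m, P₁ r (g' m) = P₂ r m := by
    intro r m
    rw [hgv', map_sum, Finset.sum_eq_single r]
    · rw [h₁.pi_same]
    · intro t _ ht; rw [h₁.pi_ne r t ht.symm]
    · simp
  have hgg' : ∀ m, g (g' m) = m := by
    intro m
    rw [hgv' m, map_sum]
    simp_rw [hgI, h₂.total]
  have hg'g : ∀ m, g' (g m) = m := by
    intro m
    rw [hgv m, map_sum]
    simp_rw [hgI', h₁.total]
  have hgr : Graded g := by
    intro i
    refine LinearMap.ext fun m => ?_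
    simp only [LinearMap.comp_apply]
    rw [hgv, hgv, map_sum]
    refine Finset.sum_congr rfl fun r _ => ?_
    rw [(h₁.gP r).apply, (h₂.gI r).apply]
  let G := LinearMap.toMatrix' g
  let A : Matrix (Σ i, Fin (d i)) (Σ i, Fin (d i)) (Polynomial K) :=
    1 + (Polynomial.X : Polynomial K) • ((G - 1).map Polynomial.C)
  let δ := A.det
  let At : K → Matrix (Σ i, Fin (d i)) (Σ i, Fin (d i)) K := fun t =>
    A.map (Polynomial.evalRingHom t)
  let Bt : K → Matrix (Σ i, Fin (d i)) (Σ i, Fin (d i)) K := fun t =>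
    A.adjugate.map (Polynomial.evalRingHom t)
  have hAB : ∀ t, At t * Bt t = δ.eval t • (1 : Matrix _ _ K) := by
    intro t
    have := congrArg (fun M => M.map (Polynomial.evalRingHom t)) A.mul_adjugate
    simp only [Matrix.map_mul] at this
    rw [this]
    ext v w
    simp [Matrix.one_apply, δ]
    split_ifs <;> simp
  have hBA : ∀ t, Bt t * At t = δ.eval t • (1 : Matrix _ _ K) := by
    intro t
    have := congrArg (fun M => M.map (Polynomial.evalRingHom t)) A.adjugate_mul
    simp only [Matrix.map_mul] at this
    rw [this]
    ext v w
    simp [Matrix.one_apply, δ]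
    split_ifs <;> simp
  let T := {t : K // δ.eval t ≠ 0}
  let gt : T → Module.End K (Carrier Q d K) := fun t => Matrix.toLin' (At t.1)
  let gt' : T → Module.End K (Carrier Q d K) := fun t =>
    Matrix.toLin' ((δ.eval t.1)⁻¹ • Bt t.1)
  have hAt : ∀ t, At t = 1 + t • (G - 1) := by
    intro t
    ext v w
    simp [At, A, Matrix.one_apply]
    split_ifs <;> simp
  have hgt : ∀ t m, gt t m = m + t.1 • (g m - m) := by
    intro t m
    simp only [gt, hAt]
    rw [map_add, map_smul, map_sub, Matrix.toLin'_one, Matrix.toLin'_toMatrix']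
    simp
  have h1 : ∀ t m, gt t (gt' t m) = m := by
    intro t m
    simp only [gt, gt']
    rw [← Matrix.toLin'_mul_apply, Matrix.mul_smul, hAB, smul_smul, inv_mul_cancel₀ t.2, one_smul,
      Matrix.toLin'_one, LinearMap.id_apply]
  have h2 : ∀ t m, gt' t (gt t m) = m := by
    intro t m
    simp only [gt, gt']
    rw [← Matrix.toLin'_mul_apply, Matrix.smul_mul, hBA, smul_smul, inv_mul_cancel₀ t.2, one_smul,
      Matrix.toLin'_one, LinearMap.id_apply]
  have hgrt : ∀ t, Graded (gt t) := by
    intro t i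
    refine LinearMap.ext fun m => ?_
    simp only [LinearMap.comp_apply]
    rw [hgt, hgt, map_add, map_smul, map_sub, hgr.apply]
  have hb : ∀ t, IsBip (fun r => gt t ∘ₗ I₁ r) (fun r => P₁ r ∘ₗ gt' t) := fun t =>
    h₁.conj (hgrt t) (h1 t) (h2 t)
  have r1 : EntReg (ratAlg δ) gt := by
    intro v w
    refine ⟨A w v, 0, fun t => ?_⟩
    simp [gt, At]
  have r2 : EntReg (ratAlg δ) gt' := by
    intro v w
    refine ⟨A.adjugate w v, 1, fun t => ?_⟩
    have := t.2
    simp only [gt', Bt, Matrix.toLin'_apply, Matrix.mulVec_single_one, pow_one]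
    simp
    field_simp
  have key : ∀ (y : ∀ r, RepSpace Q (D r) K) (p : MvPolynomial (Coords Q d) K),
      (fun t => MvPolynomial.eval (bsum (fun r => gt t ∘ₗ I₁ r) (fun r => P₁ r ∘ₗ gt' t) y) p)
        ∈ ratAlg δ := by
    intro y p
    refine eval_mem (ratAlg δ) _ (fun c => ?_) p
    refine bsum_reg (ratAlg δ) (I := fun t r => gt t ∘ₗ I₁ r) (P := fun t r => P₁ r ∘ₗ gt' t)
      (y := fun _ => y) (fun r => ?_) (fun r => ?_) (fun r c => const_mem _ _) c
    · exact EntReg.comp (ratAlg δ) r1 (const_entReg _ _)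
    · exact EntReg.comp (ratAlg δ) (const_entReg _ _) r2
  have d0 : δ.eval 0 ≠ 0 := by
    have : δ.eval 0 = (At 0).det := by
      have := RingHom.map_det (Polynomial.evalRingHom (0 : K)) A
      exact this
    rw [this, hAt]
    simp
  have d1 : δ.eval 1 ≠ 0 := by
    have : δ.eval 1 = (At 1).det := by
      have := RingHom.map_det (Polynomial.evalRingHom (1 : K)) A
      exact this
    rw [this, hAt]
    have hG : G * LinearMap.toMatrix' g' = 1 := by
      rw [← LinearMap.toMatrix'_comp]
      have : g ∘ₗ g' = LinearMap.id := LinearMap.ext hgg'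
      rw [this, LinearMap.toMatrix'_id]
    have := congrArg Matrix.det hG
    rw [Matrix.det_mul, Matrix.det_one] at this
    simpa using left_ne_zero_of_mul_eq_one this
  have z0 : ∀ m, gt ⟨0, d0⟩ m = m := fun m => by rw [hgt]; simp
  have z0' : ∀ m, gt' ⟨0, d0⟩ m = m := fun m => by
    have := h1 ⟨0, d0⟩ m
    rwa [z0] at this
  have z1 : ∀ m, gt ⟨1, d1⟩ m = g m := fun m => by rw [hgt]; simp
  have z1' : ∀ m, gt' ⟨1, d1⟩ m = g' m := fun m => by
    have := h1 ⟨1, d1⟩ m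
    rw [z1] at this
    rw [← hg'g (gt' _ m), this]
  obtain ⟨t, ht1, ht2⟩ := rat_common δ (key y₁ p₁) (key y₂ p₂) (s := ⟨0, d0⟩) (t := ⟨1, d1⟩) (by
      have a1 : (fun r => gt ⟨0, d0⟩ ∘ₗ I₁ r) = I₁ := by
        funext r; exact LinearMap.ext fun m => z0 _
      have a2 : (fun r => P₁ r ∘ₗ gt' ⟨0, d0⟩) = P₁ := by
        funext r; refine LinearMap.ext fun m => ?_
        rw [LinearMap.comp_apply, z0']
      simp only [a1, a2]
      exact e₁) (by
      have a1 : (fun r => gt ⟨1, d1⟩ ∘ₗ I₁ r) = I₂ := by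
        funext r; refine LinearMap.ext fun m => ?_
        rw [LinearMap.comp_apply, z1, hgI]
      have a2 : (fun r => P₁ r ∘ₗ gt' ⟨1, d1⟩) = P₂ := by
        funext r; refine LinearMap.ext fun m => ?_
        rw [LinearMap.comp_apply, z1', hPg]
      simp only [a1, a2]
      exact e₂)
  exact ⟨_, _, hb t, ht1, ht2⟩

theorem DSJ_irr [Infinite K] {S : ∀ j, Set (GenV Q (D j) K Rels)}
    (hS : ∀ j, IsIrreducible (S j)) : IsPreirreducible (DSJ d S) := by
  classical
  rintro U V hU hV ⟨_, ⟨I₁, P₁, h₁, y₁, hy₁, rfl⟩, hxU⟩ ⟨_, ⟨I₂, P₂, h₂, y₂, hy₂, rfl⟩, hxV⟩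
  obtain ⟨U', hU', rfl⟩ := isOpen_induced_iff.1 hU
  obtain ⟨V', hV', rfl⟩ := isOpen_induced_iff.1 hV
  obtain ⟨p₁, e₁, hp₁⟩ := exists_basic hU' hxU
  obtain ⟨p₂, e₂, hp₂⟩ := exists_basic hV' hxV
  obtain ⟨I, P, h, f₁, f₂⟩ := join_bip h₁ h₂ (fun j => (y₁ j).1) (fun j => (y₂ j).1) p₁ p₂ e₁ e₂
  obtain ⟨z, hz, hzU, hzV⟩ := sep_irred (f := bsumV h) (g := bsumV h) (bsumV_cont h) (bsumV_cont h)
    hS hU hV hy₁ hy₂ (hp₁ _ f₁) (hp₂ _ f₂)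
  exact ⟨_, ⟨I, P, h, z, hz, rfl⟩, hzU, hzV⟩

theorem comp_max {X : Type} [TopologicalSpace X] {C S : Set X} (hC : C ∈ irreducibleComponents X)
    (hS : IsPreirreducible S) (h : C ⊆ S) : C = S :=
  have hC' : Maximal IsIrreducible C := hC
  le_antisymm h (hC'.le_of_ge ⟨hC'.prop.nonempty.mono h, hS⟩ h)

/-- irreducible components are stable under isomorphism -/
theorem comp_stable [Infinite K] {C : Set (GenV Q d K Rels)}
    (hC : C ∈ irreducibleComponents (GenV Q d K Rels)) {x y : GenV Q d K Rels} (hx : x ∈ C)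
    {φ ψ : Module.End K (Carrier Q d K)} (hφ : RepHom Q K d d x.1 y.1 φ)
    (h1 : φ ∘ₗ ψ = LinearMap.id) (h2 : ψ ∘ₗ φ = LinearMap.id) : y ∈ C := by
  have hC' : Maximal IsIrreducible C := hC
  have hi : IsBip (J := Unit) (D := fun _ => d) (fun _ => φ) (fun _ => ψ) :=
    ⟨fun _ => hφ.2, fun _ => (hφ.inv h1 h2).2, fun _ m => LinearMap.congr_fun h2 m,
      fun r t h => absurd rfl h, fun m => by simpa using LinearMap.congr_fun h1 m⟩
  have hid : IsBip (Q := Q) (K := K) (J := Unit) (D := fun _ => d) (fun _ => LinearMap.id)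
      (fun _ => LinearMap.id) :=
    ⟨fun _ _ => rfl, fun _ _ => rfl, fun _ m => rfl,
      fun r t h => absurd rfl h, fun m => by simp⟩
  have := comp_max hC (DSJ_irr (d := d) (J := Unit) (D := fun _ => d) (S := fun _ => C)
    fun _ => hC'.prop) (by
      intro z hz
      refine ⟨_, _, hid, fun _ => z, fun _ => hz, Subtype.ext ?_⟩
      exact eq_bsum hid fun r a m => rfl)
  rw [this]
  refine ⟨_, _, hi, fun _ => x, fun _ => hx, Subtype.ext ?_⟩
  exact eq_bsum hi fun r a m => (LinearMap.congr_fun (hφ.1 a) m).symm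

end irr
end CBS


namespace CBS
open QuiverData

attribute [local instance] zariskiTopology

theorem irr_avoid {X ι : Type} [TopologicalSpace X] [Finite ι] {C : Set X} (hC : IsIrreducible C)
    {Z : ι → Set X} (hZ : ∀ i, IsClosed (Z i)) (h : ∀ i, ¬ C ⊆ Z i) : ∃ x ∈ C, ∀ i, x ∉ Z i := by
  classical
  have := Fintype.ofFinite ι
  by_contra hcon
  push Not at hcon
  obtain ⟨z, hz, hCz⟩ := isIrreducible_iff_sUnion_isClosed.1 hC (Finset.univ.image Z)
    (by
      intro z hz
      obtain ⟨i, -, rfl⟩ := Finset.mem_image.1 hz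
      exact hZ i)
    (by
      intro x hx
      obtain ⟨i, hi⟩ := hcon x hx
      exact ⟨Z i, by simp, hi⟩)
  obtain ⟨i, -, rfl⟩ := Finset.mem_image.1 hz
  exact h i hCz

section exi
variable {K : Type} [Field K] {Q : QuiverData} {d : Fin Q.n → ℕ}
  {Rels : Set (FreeAlgebra K (Fin Q.n ⊕ Fin Q.numArrows))}
variable {J : Type} [Fintype J] {D : J → Fin Q.n → ℕ}

/-- generic indecomposability -/
def GenInd (S : Set (GenV Q d K Rels)) : Prop :=
  ∃ W, IsOpen W ∧ (S ∩ W).Nonempty ∧ ∀ y ∈ S ∩ W, IndecompRep Q d K y.1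

theorem DSJ_sigma {J' : J → Type} [∀ r, Fintype (J' r)] {D' : ∀ r, J' r → Fin Q.n → ℕ}
    (S : ∀ r j, Set (GenV Q (D' r j) K Rels)) :
    DSJ d (fun r => DSJ (D r) (S r)) ⊆
      DSJ (D := fun s : Σ r, J' r => D' s.1 s.2) d (fun s => S s.1 s.2) := by
  rintro x ⟨I, P, h, z, hz, rfl⟩
  choose I' P' h' y' hy' e using hz
  refine ⟨_, _, h.sigma h', fun s => y' s.1 s.2, fun s => hy' _ _, Subtype.ext ?_⟩
  refine eq_bsum (h.sigma h') ?_
  rintro ⟨r, j⟩ a m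
  have e1 := LinearMap.congr_fun ((homI h (fun r => (z r).1) r).1 a) (I' r j m)
  have e2 := LinearMap.congr_fun ((homI (h' r) (fun j => (y' r j).1) j).1 a) m
  have e3 : (z r).1 = bsum (I' r) (P' r) (fun j => (y' r j).1) := congrArg Subtype.val (e r)
  simp only [LinearMap.comp_apply] at e1 e2
  change arrowMap Q d K (bsum I P fun r => (z r).1) a (I r (I' r j m)) =
    I r (I' r j (arrowMap Q (D' r j) K (y' r j).1 a m))
  rw [← e1, e2, e3]

theorem DSJ_reindex {J' : Type} [Fintype J'] (e : J' ≃ J) (S : ∀ j, Set (GenV Q (D j) K Rels)) :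
    DSJ d S ⊆ DSJ (D := fun j => D (e j)) d (fun j => S (e j)) := by
  rintro x ⟨I, P, h, y, hy, rfl⟩
  refine ⟨_, _, h.reindex e, fun j => y (e j), fun j => hy _, Subtype.ext ?_⟩
  refine eq_bsum (h.reindex e) fun j a m => ?_
  exact (LinearMap.congr_fun ((homI h (fun r => (y r).1) (e j)).1 a) m).symm

theorem isClosed_comp {X : Type} [TopologicalSpace X] {C : Set X}
    (hC : C ∈ irreducibleComponents X) : IsClosed C :=
  isClosed_of_mem_irreducibleComponents C hC

theorem exists_decomp [Infinite K] (n : ℕ) : ∀ (d : Fin Q.n → ℕ) (C : Set (GenV Q d K Rels)),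
    C ∈ irreducibleComponents (GenV Q d K Rels) → ∑ i, d i = n →
    ∃ (J : Type) (_ : Fintype J) (D : J → Fin Q.n → ℕ) (S : ∀ j, Set (GenV Q (D j) K Rels)),
      (∀ j, S j ∈ irreducibleComponents (GenV Q (D j) K Rels)) ∧ (∀ j, GenInd (S j)) ∧
      C = closure (DSJ d S) := by
  induction n using Nat.strong_induction_on with
  | _ n ih =>
  intro d C hC hn
  have hC' : Maximal IsIrreducible C := hC
  by_cases hd : d = 0
  · subst hd
    have hcar : Subsingleton (Carrier Q 0 K) := ⟨fun a b => funext fun v => v.2.elim0⟩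
    have hsub : Subsingleton (GenV Q 0 K Rels) :=
      ⟨fun a b => Subtype.ext (funext fun c => c.2.1.elim0)⟩
    obtain ⟨x, hx⟩ := hC'.prop.nonempty
    refine ⟨Empty, inferInstance, fun e => e.elim, fun e => e.elim, fun e => e.elim,
      fun e => e.elim, ?_⟩
    have hb : IsBip (Q := Q) (K := K) (d := 0) (J := Empty) (D := fun e => e.elim)
        (fun e => e.elim) (fun e => e.elim) :=
      ⟨fun e => e.elim, fun e => e.elim, fun e => e.elim, fun e => e.elim,
        fun m => Subsingleton.elim _ _⟩
    have hmem : x ∈ closure (DSJ (K := K) (Rels := Rels) (J := Empty) (D := fun e => e.elim)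
        (0 : Fin Q.n → ℕ) (fun e => e.elim)) :=
      subset_closure ⟨_, _, hb, fun e => e.elim, fun e => e.elim, Subsingleton.elim _ _⟩
    ext z
    rw [Subsingleton.elim z x]
    exact ⟨fun _ => hmem, fun _ => hx⟩
  by_cases hgi : GenInd C
  · refine ⟨Unit, inferInstance, fun _ => d, fun _ => C, fun _ => hC, fun _ => hgi, ?_⟩
    have hid : IsBip (Q := Q) (K := K) (J := Unit) (D := fun _ => d) (fun _ => LinearMap.id)
        (fun _ => LinearMap.id) :=
      ⟨fun _ _ => rfl, fun _ _ => rfl, fun _ m => rfl,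
        fun r t h => absurd rfl h, fun m => by simp⟩
    refine comp_max hC (DSJ_irr fun _ => hC'.prop).closure ?_
    intro z hz
    refine subset_closure ⟨_, _, hid, fun _ => z, fun _ => hz, Subtype.ext ?_⟩
    exact eq_bsum hid fun r a m => rfl
  let dm : (Bool → ∀ i, Fin (d i + 1)) → Bool → Fin Q.n → ℕ := fun D b i => (D b i).1
  let Ty := Σ D : {D : Bool → ∀ i, Fin (d i + 1) // ∀ b, dm D b ≠ 0},
    ∀ b, (irreducibleComponents (GenV Q (dm D.1 b) K Rels))
  have hfin : Finite Ty := by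
    have : ∀ (D : {D : Bool → ∀ i, Fin (d i + 1) // ∀ b, dm D b ≠ 0}) b,
      Finite (irreducibleComponents (GenV Q (dm D.1 b) K Rels)) := fun D b => finite_comps
    infer_instance
  let Z : Ty → Set (GenV Q d K Rels) := fun t => closure (DSJ d fun b => (t.2 b).1)
  have hZ : ∀ t, IsClosed (Z t) := fun t => isClosed_closure
  have hex : ∃ t, C ⊆ Z t := by
    by_contra hcon
    push Not at hcon
    obtain ⟨x, hx, hxZ⟩ := irr_avoid hC'.prop hZ hcon
    refine hgi ⟨⋂ t, (Z t)ᶜ, isOpen_iInter_of_finite fun t => (hZ t).isOpen_compl,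
      ⟨x, hx, Set.mem_iInter.2 hxZ⟩, ?_⟩
    rintro y ⟨hyC, hyZ⟩
    by_contra hy
    obtain ⟨D, I, P, h, hD, w, hw⟩ := exists_split hd hy
    have hle : ∀ b i, D b i < d i + 1 := by
      intro b i
      rw [Nat.lt_succ_iff, dim_sum h i]
      exact Finset.single_le_sum (f := fun b => D b i) (fun _ _ => Nat.zero_le _)
        (Finset.mem_univ b)
    have hwm : ∀ b, w b ∈ RepVar Q (D b) K Rels := by
      rw [← bsum_mem h, ← hw]
      exact y.2
    let D₀ : Bool → ∀ i, Fin (d i + 1) := fun b i => ⟨D b i, hle b i⟩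
    let wv : ∀ b, GenV Q (D b) K Rels := fun b => ⟨w b, hwm b⟩
    let t : Ty := ⟨⟨D₀, hD⟩, fun b => ⟨irreducibleComponent (wv b),
      irreducibleComponent_mem_irreducibleComponents _⟩⟩
    refine Set.mem_iInter.1 hyZ t (subset_closure ?_)
    exact ⟨I, P, h, wv, fun b => mem_irreducibleComponent, Subtype.ext hw⟩
  obtain ⟨⟨⟨D₀, hD⟩, Zc⟩, hCZ⟩ := hex
  let D : Bool → Fin Q.n → ℕ := dm D₀
  have hdim : ∀ i, d i = ∑ b, D b i := by
    obtain ⟨x, hx⟩ := hC'.prop.nonempty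
    obtain ⟨_, I, P, h, -⟩ := closure_nonempty_iff.1 ⟨x, hCZ hx⟩
    exact dim_sum h
  have hlt : ∀ b, ∑ i, D b i < n := by
    intro b
    rw [← hn]
    obtain ⟨i, hi⟩ := Function.ne_iff.1 (hD (!b))
    have hi' : 0 < D (!b) i := Nat.pos_of_ne_zero hi
    have hs : ∀ i, d i = D b i + D (!b) i := by
      intro i
      rw [hdim i]
      cases b <;> simp [add_comm]
    refine Finset.sum_lt_sum (fun i _ => by rw [hs i]; exact Nat.le_add_right _ _)
      ⟨i, Finset.mem_univ i, by rw [hs i]; omega⟩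
  choose J' fJ D' S' h1 h2 h3 using fun b => ih _ (hlt b) (D b) (Zc b).1 (Zc b).2 rfl
  refine ⟨Σ b, J' b, inferInstance, fun s => D' s.1 s.2, fun s => S' s.1 s.2, fun s => h1 _ _,
    fun s => h2 _ _, ?_⟩
  refine comp_max hC (DSJ_irr fun s => ?_).closure ?_
  · have : Maximal IsIrreducible (S' s.1 s.2) := h1 s.1 s.2
    exact this.prop
  · refine hCZ.trans (closure_minimal ?_ isClosed_closure)
    have : (fun b => (Zc b).1) = fun b => closure (DSJ (D b) (S' b)) := funext h3
    change DSJ d (fun b => (Zc b).1) ⊆ _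
    rw [this]
    exact (DSJ_closure _).trans (closure_mono (DSJ_sigma _))

theorem exists_canonical [Infinite K] {C : Set (GenV Q d K Rels)}
    (hC : C ∈ irreducibleComponents (GenV Q d K Rels)) :
    ∃ (s : ℕ) (D : Fin s → Fin Q.n → ℕ) (Cs : ∀ r : Fin s, Set (GenV Q (D r) K Rels)),
      IsCanonicalDecomposition K Q d Rels C s D Cs := by
  have hC' : Maximal IsIrreducible C := hC
  obtain ⟨J, _, D, S, h1, h2, h3⟩ := exists_decomp _ d C hC rfl
  let e := (Fintype.equivFin J).symm
  have hmax : ∀ j, Maximal IsIrreducible (S j) := h1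
  refine ⟨Fintype.card J, fun j => D (e j), fun j => S (e j), ?_, fun j => h1 _, fun j => ?_, ?_⟩
  · obtain ⟨x, hx⟩ := hC'.prop.nonempty
    rw [h3] at hx
    obtain ⟨_, I, P, h, -⟩ := closure_nonempty_iff.1 ⟨x, hx⟩
    intro i
    rw [dim_sum h i]
    exact (e.sum_comp fun j => D j i).symm
  · obtain ⟨W, hW, hne, hind⟩ := h2 (e j)
    exact ⟨_, Set.inter_subset_left, ⟨W, hW, rfl⟩,
      subset_closure_inter_of_isPreirreducible_of_isOpen (hmax (e j)).prop.isPreirreducible hW hne,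
      hind⟩
  · rw [DSJ_eq]
    refine comp_max hC (DSJ_irr fun j => (hmax (e j)).prop).closure ?_
    conv_lhs => rw [h3]
    exact closure_mono (DSJ_reindex e S)

end exi
end CBS


namespace CBS
open QuiverData

attribute [local instance] zariskiTopology

section closedness
variable {ι K : Type} [Field K]

theorem isClosed_lin_eq {V W : Type} [DecidableEq V] [Finite V]
    {φ ψ : (ι → K) → ((V → K) →ₗ[K] (W → K))}
    (hφ : EntReg (polyAlg ι K) φ) (hψ : EntReg (polyAlg ι K) ψ) : IsClosed {z | φ z = ψ z} := by
  have : {z | φ z = ψ z} = ⋂ v, ⋂ w, {z | φ z (Pi.single v 1) w = ψ z (Pi.single v 1) w} := by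
    ext z
    simp only [Set.mem_iInter]
    refine ⟨fun h v w => ?_, fun h => ?_⟩
    · have h' : φ z = ψ z := h
      change φ z (Pi.single v 1) w = ψ z (Pi.single v 1) w
      rw [h']
    · refine LinearMap.pi_ext' fun v => LinearMap.ext_ring ?_
      funext w
      exact h v w
  rw [this]
  exact isClosed_iInter fun v => isClosed_iInter fun w => isClosed_eq' (hφ v w) (hψ v w)

theorem EntReg.sum {X : Type} (F : Subalgebra K (X → K)) {J V W : Type} [Fintype J] [DecidableEq V]
    {φ : X → J → ((V → K) →ₗ[K] (W → K))} (hφ : ∀ j, EntReg F fun z => φ z j) :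
    EntReg F fun z => ∑ j, φ z j := by
  intro v w
  simp only [LinearMap.sum_apply, Finset.sum_apply]
  exact sum_mem' F _ fun j _ => hφ j v w

theorem toLin_reg {X : Type} (F : Subalgebra K (X → K)) {V W : Type} [Fintype V] [DecidableEq V]
    {M : X → Matrix W V K} (hM : ∀ w v, (fun z => M z w v) ∈ F) :
    EntReg F fun z => Matrix.toLin' (M z) := by
  intro v w
  simpa using hM w v

end closedness

section uni
variable {K : Type} [Field K] {Q : QuiverData} {d : Fin Q.n → ℕ}
  {Rels : Set (FreeAlgebra K (Fin Q.n ⊕ Fin Q.numArrows))}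
variable {J : Type} [Fintype J] {D : J → Fin Q.n → ℕ}

theorem isClosed_bip {ι : Type} {I : (ι → K) → ∀ r, Carrier Q (D r) K →ₗ[K] Carrier Q d K}
    {P : (ι → K) → ∀ r, Carrier Q d K →ₗ[K] Carrier Q (D r) K}
    (hI : ∀ r, EntReg (polyAlg ι K) fun z => I z r)
    (hP : ∀ r, EntReg (polyAlg ι K) fun z => P z r) : IsClosed {z | IsBip (I z) (P z)} := by
  have : {z | IsBip (I z) (P z)} =
      (⋂ r, ⋂ i, {z | I z r ∘ₗ proj Q (D r) K i = proj Q d K i ∘ₗ I z r}) ∩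
      ((⋂ r, ⋂ i, {z | P z r ∘ₗ proj Q d K i = proj Q (D r) K i ∘ₗ P z r}) ∩
      ((⋂ r, {z | P z r ∘ₗ I z r = LinearMap.id}) ∩
      ((⋂ r, ⋂ t, ⋂ (_ : r ≠ t), {z | P z r ∘ₗ I z t = 0}) ∩
      {z | ∑ r, I z r ∘ₗ P z r = LinearMap.id}))) := by
    ext z
    simp only [Set.mem_inter_iff, Set.mem_iInter]
    constructor
    · intro h
      have h : IsBip (I z) (P z) := h
      refine ⟨fun r i => h.gI r i, fun r i => h.gP r i, fun r => LinearMap.ext (h.pi_same r),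
        fun r t hrt => LinearMap.ext (h.pi_ne r t hrt), LinearMap.ext fun m => ?_⟩
      rw [LinearMap.sum_apply]
      exact h.total m
    · rintro ⟨h1, h2, h3, h4, h5⟩
      refine ⟨fun r i => h1 r i, fun r i => h2 r i, fun r => LinearMap.congr_fun (h3 r),
        fun r t hrt => LinearMap.congr_fun (h4 r t hrt), fun m => ?_⟩
      have := LinearMap.congr_fun h5 m
      rw [LinearMap.sum_apply] at this
      exact this
  rw [this]
  refine IsClosed.inter ?_ (IsClosed.inter ?_ (IsClosed.inter ?_ (IsClosed.inter ?_ ?_)))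
  · exact isClosed_iInter fun r => isClosed_iInter fun i => isClosed_lin_eq
      (EntReg.comp _ (hI r) (const_entReg _ _)) (EntReg.comp _ (const_entReg _ _) (hI r))
  · exact isClosed_iInter fun r => isClosed_iInter fun i => isClosed_lin_eq
      (EntReg.comp _ (hP r) (const_entReg _ _)) (EntReg.comp _ (const_entReg _ _) (hP r))
  · exact isClosed_iInter fun r => isClosed_lin_eq
      (EntReg.comp _ (hP r) (hI r)) (const_entReg _ _)
  · exact isClosed_iInter fun r => isClosed_iInter fun t => isClosed_iInter fun _ =>
      isClosed_lin_eq (EntReg.comp _ (hP r) (hI t)) (const_entReg _ _)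
  · exact isClosed_lin_eq (EntReg.sum _ fun r => EntReg.comp _ (hI r) (hP r)) (const_entReg _ _)

theorem dense_lemma [IsAlgClosed K] {C : Set (GenV Q d K Rels)}
    (hC : C ∈ irreducibleComponents (GenV Q d K Rels))
    {S : ∀ j, Set (GenV Q (D j) K Rels)}
    (hS : ∀ j, S j ∈ irreducibleComponents (GenV Q (D j) K Rels))
    (hCS : C = closure (DSJ d S)) {W : ∀ j, Set (GenV Q (D j) K Rels)}
    (hW : ∀ j, IsOpen (W j)) (hne : ∀ j, (S j ∩ W j).Nonempty) :
    ∃ O : Set (GenV Q d K Rels), IsOpen O ∧ (C ∩ O).Nonempty ∧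
      C ∩ O ⊆ DSJ d (fun j => S j ∩ W j) := by
  classical
  have : Infinite K := IsAlgClosed.instInfinite
  have hC' : Maximal IsIrreducible C := hC
  have hS' : ∀ j, Maximal IsIrreducible (S j) := hS
  have hp : ∀ j, ∃ (x : GenV Q (D j) K Rels) (p : MvPolynomial (Coords Q (D j)) K), x ∈ S j ∧
      MvPolynomial.eval x.1 p ≠ 0 ∧
      ∀ y : GenV Q (D j) K Rels, MvPolynomial.eval y.1 p ≠ 0 → y ∈ W j := by
    intro j
    obtain ⟨x, hxS, hxW⟩ := hne j
    obtain ⟨W', hW', e⟩ := isOpen_induced_iff.1 (hW j)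
    rw [← e] at hxW
    obtain ⟨p, hp, hp'⟩ := exists_basic hW' hxW
    refine ⟨x, p, hxS, hp, fun y hy => ?_⟩
    rw [← e]
    exact hp' _ hy
  choose x₀ p hx₀ hpx hpW using hp
  let T : ∀ j, Set (GenV Q (D j) K Rels) := fun j =>
    S j ∩ {y | MvPolynomial.eval y.1 (p j) ≠ 0}
  have hTo : ∀ j, IsOpen {y : GenV Q (D j) K Rels | MvPolynomial.eval y.1 (p j) ≠ 0} := fun j =>
    (isOpen_ne (p j)).preimage continuous_subtype_val
  have hTW : DSJ d T ⊆ DSJ d (fun j => S j ∩ W j) := DSJ_mono fun j y hy => ⟨hy.1, hpW j y hy.2⟩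
  have hTS : DSJ d T ⊆ DSJ d S := DSJ_mono fun j y hy => hy.1
  have hTirr : ∀ j, IsIrreducible (T j) := by
    intro j
    refine ⟨⟨x₀ j, hx₀ j, hpx j⟩, ?_⟩
    rintro U V hU hV ⟨a, ⟨ha, ha'⟩, haU⟩ ⟨b, ⟨hb, hb'⟩, hbV⟩
    obtain ⟨c, hc, ⟨hc1, hc2⟩, hc3⟩ := (hS' j).prop.isPreirreducible _ _ ((hTo j).inter hU)
      ((hTo j).inter hV) ⟨a, ha, ha', haU⟩ ⟨b, hb, hb', hbV⟩
    exact ⟨c, ⟨hc, hc1⟩, hc2, hc3.2⟩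
  have hCT : C = closure (DSJ d T) := by
    apply Set.Subset.antisymm
    · conv_lhs => rw [hCS]
      refine closure_minimal ?_ isClosed_closure
      refine (DSJ_mono fun j => ?_).trans (DSJ_closure T)
      exact subset_closure_inter_of_isPreirreducible_of_isOpen (hS' j).prop.isPreirreducible
        (hTo j) ⟨x₀ j, hx₀ j, hpx j⟩
    · rw [hCS]
      exact closure_mono hTS
  have hTne : (DSJ d T).Nonempty := by
    rw [← closure_nonempty_iff, ← hCT]
    exact hC'.prop.nonempty
  let ι := (Σ r : J, (Σ i, Fin (d i)) × (Σ i, Fin (D r i))) ⊕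
    ((Σ r : J, (Σ i, Fin (D r i)) × (Σ i, Fin (d i))) ⊕ ((Σ r : J, Coords Q (D r)) ⊕ Unit))
  let I : (ι → K) → ∀ r, Carrier Q (D r) K →ₗ[K] Carrier Q d K := fun z r =>
    Matrix.toLin' (Matrix.of fun v w => z (Sum.inl ⟨r, v, w⟩))
  let P : (ι → K) → ∀ r, Carrier Q d K →ₗ[K] Carrier Q (D r) K := fun z r =>
    Matrix.toLin' (Matrix.of fun v w => z (Sum.inr (Sum.inl ⟨r, v, w⟩)))
  let y : (ι → K) → ∀ r, RepSpace Q (D r) K := fun z r c => z (Sum.inr (Sum.inr (Sum.inl ⟨r, c⟩)))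
  let u : (ι → K) → K := fun z => z (Sum.inr (Sum.inr (Sum.inr ())))
  let f : (ι → K) → RepSpace Q d K := fun z => bsum (I z) (P z) (y z)
  have hI : ∀ r, EntReg (polyAlg ι K) fun z => I z r := fun r =>
    toLin_reg _ fun w v => coord_mem _
  have hP : ∀ r, EntReg (polyAlg ι K) fun z => P z r := fun r =>
    toLin_reg _ fun w v => coord_mem _
  have hy : ∀ r c, (fun z => y z r c) ∈ polyAlg ι K := fun r c => coord_mem _
  have hf : ∀ c, (fun z => f z c) ∈ polyAlg ι K := fun c => bsum_reg _ hI hP hy c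
  let Y : Set (ι → K) := {z | IsBip (I z) (P z)} ∩
    ((⋂ r, {z | y z r ∈ Subtype.val '' S r}) ∩
      {z | u z * ∏ r, MvPolynomial.eval (y z r) (p r) = 1})
  have hY : IsClosed Y := by
    refine (isClosed_bip hI hP).inter (IsClosed.inter ?_ ?_)
    · refine isClosed_iInter fun r => ?_
      have h1 : IsClosed (Subtype.val '' S r : Set (RepSpace Q (D r) K)) :=
        repVar_closed.isClosedEmbedding_subtypeVal.isClosedMap _ (isClosed_comp (hS r))
      have h2 : Continuous fun z => y z r := continuous_of_poly (hy r)
      exact h1.preimage h2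
    · exact isClosed_eq' (mul_mem' _ (coord_mem _)
        (prod_mem' _ _ fun r _ => eval_mem _ (fun z => y z r) (hy r) (p r))) (const_mem _ 1)
  have hfY : f '' Y = Subtype.val '' DSJ d T := by
    ext w
    constructor
    · rintro ⟨z, ⟨hz1, hz2, hz3⟩, rfl⟩
      choose y' hy' e using fun r => Set.mem_iInter.1 hz2 r
      have hz1 : IsBip (I z) (P z) := hz1
      have hz3 : u z * ∏ r, MvPolynomial.eval (y z r) (p r) = 1 := hz3
      have hz4 := right_ne_zero_of_mul_eq_one hz3
      rw [Finset.prod_ne_zero_iff] at hz4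
      refine ⟨bsumV hz1 y', ⟨I z, P z, hz1, y', fun r => ⟨hy' r, ?_⟩, rfl⟩, ?_⟩
      · have := hz4 r (Finset.mem_univ r)
        rw [← e r] at this
        exact this
      · change bsum (I z) (P z) (fun r => (y' r).1) = bsum (I z) (P z) (y z)
        congr 1
        funext r
        exact e r
    · rintro ⟨_, ⟨I', P', h', y', hy', rfl⟩, rfl⟩
      let z : ι → K := Sum.elim (fun t => LinearMap.toMatrix' (I' t.1) t.2.1 t.2.2)
        (Sum.elim (fun t => LinearMap.toMatrix' (P' t.1) t.2.1 t.2.2)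
          (Sum.elim (fun t => (y' t.1).1 t.2)
            (fun _ => (∏ r, MvPolynomial.eval (y' r).1 (p r))⁻¹)))
      have eI : I z = I' := by
        funext r
        exact Matrix.toLin'_toMatrix' (I' r)
      have eP : P z = P' := by
        funext r
        exact Matrix.toLin'_toMatrix' (P' r)
      have ey : y z = fun r => (y' r).1 := rfl
      refine ⟨z, ⟨?_, ?_, ?_⟩, ?_⟩
      · change IsBip (I z) (P z)
        rw [eI, eP]
        exact h'
      · exact Set.mem_iInter.2 fun r => ⟨y' r, (hy' r).1, rfl⟩
      · change (∏ r, MvPolynomial.eval (y' r).1 (p r))⁻¹ *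
          ∏ r, MvPolynomial.eval (y' r).1 (p r) = 1
        exact inv_mul_cancel₀ (Finset.prod_ne_zero_iff.2 fun r _ => (hy' r).2)
      · change bsum (I z) (P z) (y z) = bsum I' P' _
        rw [eI, eP, ey]
  have hirr : IsIrreducible (f '' Y) := by
    rw [hfY]
    exact IsIrreducible.image ⟨hTne, DSJ_irr hTirr⟩ _ continuous_subtype_val.continuousOn
  obtain ⟨q, ⟨w, hw, hwq⟩, hq⟩ := chevalley hf hY hirr
  rw [hfY] at hw hq
  refine ⟨{x | MvPolynomial.eval x.1 q ≠ 0}, (isOpen_ne q).preimage continuous_subtype_val, ?_, ?_⟩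
  · obtain ⟨x, hx, rfl⟩ := hw
    exact ⟨x, hCT ▸ subset_closure hx, hwq⟩
  · rintro x ⟨hxC, hxq⟩
    rw [hCT] at hxC
    obtain ⟨x', hx', e⟩ := hq x.1 (image_closure_subset_closure_image continuous_subtype_val
      ⟨x, hxC, rfl⟩) hxq
    rw [← Subtype.ext e]
    exact hTW hx'

theorem comp_heq [Infinite K] {e e' : Fin Q.n → ℕ} (h : e = e') {C : Set (GenV Q e K Rels)}
    {C' : Set (GenV Q e' K Rels)} (hC' : C' ∈ irreducibleComponents (GenV Q e' K Rels))
    {y : GenV Q e K Rels} {y' : GenV Q e' K Rels} (hy' : y' ∈ C')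
    (hy : ∀ Z ∈ irreducibleComponents (GenV Q e K Rels), Z ≠ C → y ∉ Z)
    {φ : Carrier Q e K →ₗ[K] Carrier Q e' K} {ψ : Carrier Q e' K →ₗ[K] Carrier Q e K}
    (hφ : RepHom Q K e e' y.1 y'.1 φ) (h1 : φ ∘ₗ ψ = LinearMap.id) (h2 : ψ ∘ₗ φ = LinearMap.id) :
    HEq C C' := by
  subst h
  apply heq_of_eq
  by_contra hne
  exact hy C' hC' (fun h => hne h.symm) (comp_stable hC' hy' (hφ.inv h1 h2) h2 h1)

/-- generic part of a component -/
theorem generic_part {C : Set (GenV Q d K Rels)}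
    (hC : C ∈ irreducibleComponents (GenV Q d K Rels)) {U : Set (GenV Q d K Rels)}
    (h1 : ∃ W, IsOpen W ∧ U = C ∩ W) (h2 : C ⊆ closure U)
    (h3 : ∀ y ∈ U, IndecompRep Q d K y.1) :
    ∃ W, IsOpen W ∧ (C ∩ W).Nonempty ∧ ∀ y ∈ C ∩ W, IndecompRep Q d K y.1 ∧
      ∀ Z ∈ irreducibleComponents (GenV Q d K Rels), Z ≠ C → y ∉ Z := by
  have hC' : Maximal IsIrreducible C := hC
  obtain ⟨W, hW, rfl⟩ := h1
  let ι := {Z // Z ∈ irreducibleComponents (GenV Q d K Rels) ∧ Z ≠ C}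
  have : Finite ι := (finite_comps (Q := Q) (d := d) (K := K) (Rels := Rels)).subset
    (fun Z (hZ : Z ∈ irreducibleComponents (GenV Q d K Rels) ∧ Z ≠ C) => hZ.1)
  have hcl : ∀ Z : ι, IsClosed Z.1 := fun Z => isClosed_comp Z.2.1
  obtain ⟨x, hx, hxZ⟩ := irr_avoid hC'.prop hcl fun Z hZ =>
    Z.2.2 (comp_max hC (Z.2.1 : Maximal IsIrreducible Z.1).prop.isPreirreducible hZ).symm
  obtain ⟨z, hz⟩ := hC'.prop.nonempty
  have hne : (C ∩ W).Nonempty := closure_nonempty_iff.1 ⟨z, h2 hz⟩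
  have ho : IsOpen (⋂ Z : ι, Z.1ᶜ) := isOpen_iInter_of_finite fun Z => (hcl Z).isOpen_compl
  refine ⟨W ∩ ⋂ Z : ι, Z.1ᶜ, hW.inter ho, ?_, ?_⟩
  · exact hC'.prop.isPreirreducible _ _ hW ho hne ⟨x, hx, Set.mem_iInter.2 hxZ⟩
  · rintro y ⟨hyC, hyW, hyZ⟩
    exact ⟨h3 y ⟨hyC, hyW⟩, fun Z hZ hZC => Set.mem_iInter.1 hyZ ⟨Z, hZ, hZC⟩⟩

theorem unique_canonical [IsAlgClosed K] {C : Set (GenV Q d K Rels)}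
    (hC : C ∈ irreducibleComponents (GenV Q d K Rels))
    {s : ℕ} {D : Fin s → Fin Q.n → ℕ} {Cs : ∀ r : Fin s, Set (GenV Q (D r) K Rels)}
    (h : IsCanonicalDecomposition K Q d Rels C s D Cs)
    {s' : ℕ} {D' : Fin s' → Fin Q.n → ℕ} {Cs' : ∀ r : Fin s', Set (GenV Q (D' r) K Rels)}
    (h' : IsCanonicalDecomposition K Q d Rels C s' D' Cs') :
    ∃ σ : Fin s ≃ Fin s', (∀ r, D r = D' (σ r)) ∧ ∀ r, HEq (Cs r) (Cs' (σ r)) := by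
  have : Infinite K := IsAlgClosed.instInfinite
  have hC' : Maximal IsIrreducible C := hC
  obtain ⟨-, a2, a3, a4⟩ := h
  obtain ⟨-, b2, b3, b4⟩ := h'
  rw [DSJ_eq] at a4 b4
  have a5 : ∀ r, ∃ W, IsOpen W ∧ (Cs r ∩ W).Nonempty ∧ ∀ y ∈ Cs r ∩ W,
      IndecompRep Q (D r) K y.1 ∧
      ∀ Z ∈ irreducibleComponents (GenV Q (D r) K Rels), Z ≠ Cs r → y ∉ Z := fun r => by
    obtain ⟨U, -, u1, u2, u3⟩ := a3 r
    exact generic_part (a2 r) u1 u2 u3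
  have b5 : ∀ r, ∃ W, IsOpen W ∧ (Cs' r ∩ W).Nonempty ∧ ∀ y ∈ Cs' r ∩ W,
      IndecompRep Q (D' r) K y.1 ∧
      ∀ Z ∈ irreducibleComponents (GenV Q (D' r) K Rels), Z ≠ Cs' r → y ∉ Z := fun r => by
    obtain ⟨U, -, u1, u2, u3⟩ := b3 r
    exact generic_part (b2 r) u1 u2 u3
  choose W hW hWne hWp using a5
  choose W' hW' hWne' hWp' using b5
  obtain ⟨O, hO, hOne, hOs⟩ := dense_lemma hC a2 a4 hW hWne
  obtain ⟨O', hO', hOne', hOs'⟩ := dense_lemma hC b2 b4 hW' hWne'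
  obtain ⟨x, hxC, hxO, hxO'⟩ := hC'.prop.isPreirreducible _ _ hO hO' hOne hOne'
  obtain ⟨I, P, hb, y, hy, hx⟩ := hOs ⟨hxC, hxO⟩
  obtain ⟨I', P', hb', y', hy', hx'⟩ := hOs' ⟨hxC, hxO'⟩
  have e : x.1 = bsum I P fun j => (y j).1 := congrArg Subtype.val hx
  have e' : x.1 = bsum I' P' fun j => (y' j).1 := congrArg Subtype.val hx'
  have i1 : ∀ r, RepHom Q K _ _ (y r).1 x.1 (I r) := fun r => by
    rw [e]; exact homI hb (fun j => (y j).1) r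
  have i2 : ∀ r, RepHom Q K _ _ x.1 (y r).1 (P r) := fun r => by
    rw [e]; exact homP hb (fun j => (y j).1) r
  have i1' : ∀ r, RepHom Q K _ _ (y' r).1 x.1 (I' r) := fun r => by
    rw [e']; exact homI hb' (fun j => (y' j).1) r
  have i2' : ∀ r, RepHom Q K _ _ x.1 (y' r).1 (P' r) := fun r => by
    rw [e']; exact homP hb' (fun j => (y' j).1) r
  obtain ⟨σ, hσ⟩ := krull_schmidt s (Fin s) (Fin s') D D' (fun j => (y j).1) (fun j => (y' j).1)
    (fun j' j => P' j' ∘ₗ I j) (fun j j' => P j ∘ₗ I' j') (by simp)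
    (fun j => (hWp j _ (hy j)).1) (fun j => (hWp' j _ (hy' j)).1)
    (fun j' j => (i1 j).comp (i2' j')) (fun j j' => (i1' j').comp (i2 j))
    (fun j => LinearMap.ext fun m => by
      simp only [LinearMap.sum_apply, LinearMap.comp_apply, LinearMap.id_apply]
      rw [← map_sum, hb'.total, hb.pi_same])
    (fun j k hjk => LinearMap.ext fun m => by
      simp only [LinearMap.sum_apply, LinearMap.comp_apply, LinearMap.zero_apply]
      rw [← map_sum, hb'.total, hb.pi_ne j k hjk])
    (fun j => LinearMap.ext fun m => by
      simp only [LinearMap.sum_apply, LinearMap.comp_apply, LinearMap.id_apply]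
      rw [← map_sum, hb.total, hb'.pi_same])
    (fun j k hjk => LinearMap.ext fun m => by
      simp only [LinearMap.sum_apply, LinearMap.comp_apply, LinearMap.zero_apply]
      rw [← map_sum, hb.total, hb'.pi_ne j k hjk])
  choose φ ψ q1 q2 q3 using hσ
  have hD : ∀ r, D r = D' (σ r) := fun r =>
    dims_of_iso (q1 r).2 ((q1 r).inv (q2 r) (q3 r)).2 (q2 r) (q3 r)
  exact ⟨σ, hD, fun r => comp_heq (hD r) (b2 (σ r)) (hy' (σ r)).1 (hWp r _ (hy r)).2 (q1 r)
    (q2 r) (q3 r)⟩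

end uni
end CBS


open QuiverData in
/-- Crawley-Boevey–Schröer. Every irreducible component `C` of
`Rep_d(Λ)` is the closure of a direct sum of indecomposable irreducible components
`C_r ⊆ Rep_{d^{(r)}}(Λ)` for a decomposition `d = ∑ d^{(r)}`; the `d^{(r)}` and `C_r` are
unique up to reordering. -/
theorem statement_3 (K : Type) [Field K] [IsAlgClosed K]
    (Q : QuiverData) (d : Fin Q.n → ℕ)
    (Rels : Set (FreeAlgebra K (Fin Q.n ⊕ Fin Q.numArrows)))
    (C : Set (GenV Q d K Rels))
    (hC : C ∈ irreducibleComponents (GenV Q d K Rels)) :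
    ∃ (s : ℕ) (D : Fin s → Fin Q.n → ℕ) (Cs : ∀ r : Fin s, Set (GenV Q (D r) K Rels)),
      IsCanonicalDecomposition K Q d Rels C s D Cs ∧
      ∀ (s' : ℕ) (D' : Fin s' → Fin Q.n → ℕ)
        (Cs' : ∀ r : Fin s', Set (GenV Q (D' r) K Rels)),
        IsCanonicalDecomposition K Q d Rels C s' D' Cs' →
        ∃ σ : Fin s ≃ Fin s', (∀ r, D r = D' (σ r)) ∧ ∀ r, HEq (Cs r) (Cs' (σ r)) := by
  have : Infinite K := IsAlgClosed.instInfinite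
  obtain ⟨s, D, Cs, h⟩ := CBS.exists_canonical hC
  exact ⟨s, D, Cs, h, fun s' D' Cs' h' => CBS.unique_canonical hC h h'⟩
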